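/- An oriented graph is a global K-graph if and only if it is a local K-graph. -/

import Mathlib

namespace PluralCuts

/-- The two horizontal directions: west and east. -/
inductive XDir : Type
  | W
  | E
deriving DecidableEq

/-- The two vertical directions: north and south. -/
inductive YDir : Type
  | N
  | S
deriving DecidableEq

/-- The other element of `{W, E}`. -/
def XDir.other : XDir → XDir
  | .W => .E
  | .E => .W

/-- A helper choosing between two values according to an `XDir`. -/
def pick {α : Type*} (w e : α) : XDir → α
  | .W => w
  | .E => e

/-- A digraph on (a finite set of) natural-number vertices: a finite set of
vertices together with a finite set of edges (ordered pairs). -/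
structure DG : Type where
  verts : Finset ℕ
  edges : Finset (ℕ × ℕ)

namespace DG

/-- `D` is an oriented graph: edges lie between vertices, the edge relation is
irreflexive and antisymmetric, and the vertex set is nonempty. -/
def IsOriented (D : DG) : Prop :=
  (∀ e ∈ D.edges, e.1 ∈ D.verts ∧ e.2 ∈ D.verts) ∧
  (∀ e ∈ D.edges, e.1 ≠ e.2) ∧
  (∀ a b : ℕ, (a, b) ∈ D.edges → (b, a) ∉ D.edges) ∧
  D.verts.Nonempty

/-- A `W`-vertex: no edge ends in it. -/
def isWVert (D : DG) (a : ℕ) : Prop := a ∈ D.verts ∧ ∀ b, (b, a) ∉ D.edges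

/-- An `E`-vertex: no edge begins in it. -/
def isEVert (D : DG) (a : ℕ) : Prop := a ∈ D.verts ∧ ∀ b, (a, b) ∉ D.edges

/-- An inner vertex: some edge ends in it and some edge begins in it. -/
def isInner (D : DG) (a : ℕ) : Prop :=
  a ∈ D.verts ∧ (∃ b, (b, a) ∈ D.edges) ∧ (∃ b, (a, b) ∈ D.edges)

/-- A `W`-edge: an edge beginning in a `W`-vertex. -/
def isWEdge (D : DG) (e : ℕ × ℕ) : Prop := e ∈ D.edges ∧ D.isWVert e.1

/-- An `E`-edge: an edge ending in an `E`-vertex. -/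
def isEEdge (D : DG) (e : ℕ × ℕ) : Prop := e ∈ D.edges ∧ D.isEVert e.2

/-- An `X`-edge, for `X ∈ {W, E}`. -/
def isXEdge (D : DG) : XDir → (ℕ × ℕ) → Prop
  | .W => D.isWEdge
  | .E => D.isEEdge

/-- An inner edge: it begins and ends in inner vertices. -/
def isInnerEdge (D : DG) (e : ℕ × ℕ) : Prop :=
  e ∈ D.edges ∧ D.isInner e.1 ∧ D.isInner e.2

/-- A functional `W`-edge `(a,b)`: `(a,c) ∈ D` implies `b = c`. -/
def funcWEdge (D : DG) (e : ℕ × ℕ) : Prop :=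
  D.isWEdge e ∧ ∀ c, (e.1, c) ∈ D.edges → c = e.2

/-- A functional `E`-edge `(b,a)`: `(c,a) ∈ D` implies `b = c`. -/
def funcEEdge (D : DG) (e : ℕ × ℕ) : Prop :=
  D.isEEdge e ∧ ∀ c, (c, e.2) ∈ D.edges → c = e.1

/-- `D` is `W`-`E`-functional: all its `W`-edges and `E`-edges are functional. -/
def WEFunctional (D : DG) : Prop :=
  (∀ e, D.isWEdge e → D.funcWEdge e) ∧ (∀ e, D.isEEdge e → D.funcEEdge e)

/-- Semi-adjacency: `(a,b)` or `(b,a)` is an edge. -/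
def semiAdj (D : DG) (a b : ℕ) : Prop := (a, b) ∈ D.edges ∨ (b, a) ∈ D.edges

/-- A semipath: a nonempty sequence of mutually distinct vertices in which any
two consecutive vertices are semi-adjacent. -/
def IsSemipath (D : DG) (l : List ℕ) : Prop :=
  l ≠ [] ∧ (∀ a ∈ l, a ∈ D.verts) ∧ l.Nodup ∧ l.Chain' D.semiAdj

/-- A path: a nonempty sequence of mutually distinct vertices in which
`(a_i, a_{i+1})` is an edge for consecutive vertices. -/
def IsPath (D : DG) (l : List ℕ) : Prop :=
  l ≠ [] ∧ (∀ a ∈ l, a ∈ D.verts) ∧ l.Nodup ∧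
    l.Chain' (fun a b => (a, b) ∈ D.edges)

/-- A semicycle: a sequence `a_1, ..., a_n` of vertices with `n ≥ 4`,
`a_1 = a_n`, `a_1, ..., a_{n-1}` mutually distinct, and consecutive vertices
semi-adjacent. -/
def IsSemicycle (D : DG) (l : List ℕ) : Prop :=
  4 ≤ l.length ∧ (∀ a ∈ l, a ∈ D.verts) ∧ l.head? = l.getLast? ∧
  l.dropLast.Nodup ∧ l.Chain' D.semiAdj

/-- `D` is weakly connected: every two vertices are joined by a semipath. -/
def WeaklyConnected (D : DG) : Prop :=
  ∀ a ∈ D.verts, ∀ b ∈ D.verts,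
    ∃ l, D.IsSemipath l ∧ l.head? = some a ∧ l.getLast? = some b

/-- `D` is asemicyclic: it has no semicycles. -/
def Asemicyclic (D : DG) : Prop := ∀ l, ¬ D.IsSemicycle l

/-- The cut `D_W[e_W - e_E]D_E`:
`(D_W - {e_W}) ∪ (D_E - {e_E}) ∪ {(e_W.1, e_E.2)}` on the union of the vertex
sets with `e_W.2` and `e_E.1` omitted. -/
def cut (DW DE : DG) (eW eE : ℕ × ℕ) : DG where
  verts := (DW.verts ∪ DE.verts) \ {eW.2, eE.1}
  edges := insert (eW.1, eE.2) ((DW.edges.erase eW) ∪ (DE.edges.erase eE))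

end DG

/-- The type of assignments of four distinguished edges `NW, SW, NE, SE`. -/
abbrev DistE : Type := YDir → XDir → ℕ × ℕ

/-- The type of labellings assigning to (inner) vertices four edges. -/
abbrev Lab : Type := ℕ → YDir → XDir → ℕ × ℕ

/-- `⟨D, ε⟩` is a basic K-graph: `D` is an oriented graph with a single inner
vertex `b`, all edges begin or end in `b`, every other vertex is joined to `b`
by an edge, there is at least one edge ending in `b` and one beginning in `b`,
the distinguished edges `ε Y W` end in `b` and `ε Y E` begin in `b`, and
(XYB): if there are at least two `X`-edges then `NX ≠ SX`. -/
def IsBasicK (D : DG) (ε : DistE) : Prop :=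
  D.IsOriented ∧
  ∃ b ∈ D.verts,
    (∀ e ∈ D.edges, e.1 = b ∨ e.2 = b) ∧
    (∀ v ∈ D.verts, v = b ∨ (v, b) ∈ D.edges ∨ (b, v) ∈ D.edges) ∧
    (∃ a, (a, b) ∈ D.edges) ∧ (∃ c, (b, c) ∈ D.edges) ∧
    (∀ Y : YDir, ε Y XDir.W ∈ D.edges ∧ (ε Y XDir.W).2 = b ∧
      ε Y XDir.E ∈ D.edges ∧ (ε Y XDir.E).1 = b) ∧
    (2 ≤ (D.edges.filter (fun e => e.2 = b)).card →
      ε YDir.N XDir.W ≠ ε YDir.S XDir.W) ∧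
    (2 ≤ (D.edges.filter (fun e => e.1 = b)).card →
      ε YDir.N XDir.E ≠ ε YDir.S XDir.E)

/-- `⟨D, ε⟩` is a basic Q-graph: as a basic K-graph but with no requirement
(XYB) on the distinguished edges. -/
def IsBasicQ (D : DG) (ε : DistE) : Prop :=
  D.IsOriented ∧
  ∃ b ∈ D.verts,
    (∀ e ∈ D.edges, e.1 = b ∨ e.2 = b) ∧
    (∀ v ∈ D.verts, v = b ∨ (v, b) ∈ D.edges ∨ (b, v) ∈ D.edges) ∧
    (∃ a, (a, b) ∈ D.edges) ∧ (∃ c, (b, c) ∈ D.edges) ∧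
    (∀ Y : YDir, ε Y XDir.W ∈ D.edges ∧ (ε Y XDir.W).2 = b ∧
      ε Y XDir.E ∈ D.edges ∧ (ε Y XDir.E).1 = b)

/-- Finite binary trees whose nodes carry an oriented graph, four
distinguished edges, and (at internal nodes) the two cut edges. -/
inductive CTree : Type
  | leaf (D : DG) (ε : DistE)
  | node (D : DG) (ε : DistE) (eW eE : ℕ × ℕ) (l r : CTree)

namespace CTree

/-- The graph at the root of the tree. -/
def rootGraph : CTree → DG
  | .leaf D _ => D
  | .node D _ _ _ _ _ => D

/-- The distinguished edges at the root of the tree. -/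
def dist : CTree → DistE
  | .leaf _ ε => ε
  | .node _ ε _ _ _ _ => ε

/-- The list of graphs-with-distinguished-edges at the leaves of the tree
(the basic K-graphs determining the leaves of a construction). -/
def leaves : CTree → List (DG × DistE)
  | .leaf D ε => [(D, ε)]
  | .node _ _ _ _ l r => l.leaves ++ r.leaves

end CTree

/-- The tree `G_W[e_W - e_E]G_E`, whose root graph is the cut of the root
graphs and whose distinguished edges are given by (XYD). -/
def mkNode (GW GE : CTree) (eW eE : ℕ × ℕ) : CTree :=
  .node (DG.cut GW.rootGraph GE.rootGraph eW eE)
    (fun Y X =>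
      match X with
      | .W => if eE = GE.dist Y XDir.W then GW.dist Y XDir.W else GE.dist Y XDir.W
      | .E => if eW = GW.dist Y XDir.E then GE.dist Y XDir.E else GW.dist Y XDir.E)
    eW eE GW GE

/-- The inductive notion of construction (of a global K-graph). -/
inductive IsConstruction : CTree → Prop
  | leaf (D : DG) (ε : DistE) (h : IsBasicK D ε) : IsConstruction (.leaf D ε)
  | node (D : DG) (ε : DistE) (eW eE : ℕ × ℕ) (GW GE : CTree)
      (hW : IsConstruction GW) (hE : IsConstruction GE)
      (hdisj : Disjoint GW.rootGraph.verts GE.rootGraph.verts)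
      (heW : GW.rootGraph.funcEEdge eW)
      (heE : GE.rootGraph.funcWEdge eE)
      (hD : D = DG.cut GW.rootGraph GE.rootGraph eW eE)
      (hXYC : ∀ Y : YDir, eW = GW.dist Y XDir.E ∨ eE = GE.dist Y XDir.W)
      (hεW : ∀ Y : YDir, ε Y XDir.W =
        if eE = GE.dist Y XDir.W then GW.dist Y XDir.W else GE.dist Y XDir.W)
      (hεE : ∀ Y : YDir, ε Y XDir.E =
        if eW = GW.dist Y XDir.E then GE.dist Y XDir.E else GW.dist Y XDir.E) :
      IsConstruction (.node D ε eW eE GW GE)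

/-- The inductive notion of construction of a global Q-graph: as
`IsConstruction` but with basic Q-graphs at the leaves. -/
inductive IsConstructionQ : CTree → Prop
  | leaf (D : DG) (ε : DistE) (h : IsBasicQ D ε) : IsConstructionQ (.leaf D ε)
  | node (D : DG) (ε : DistE) (eW eE : ℕ × ℕ) (GW GE : CTree)
      (hW : IsConstructionQ GW) (hE : IsConstructionQ GE)
      (hdisj : Disjoint GW.rootGraph.verts GE.rootGraph.verts)
      (heW : GW.rootGraph.funcEEdge eW)
      (heE : GE.rootGraph.funcWEdge eE)
      (hD : D = DG.cut GW.rootGraph GE.rootGraph eW eE)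
      (hXYC : ∀ Y : YDir, eW = GW.dist Y XDir.E ∨ eE = GE.dist Y XDir.W)
      (hεW : ∀ Y : YDir, ε Y XDir.W =
        if eE = GE.dist Y XDir.W then GW.dist Y XDir.W else GE.dist Y XDir.W)
      (hεE : ∀ Y : YDir, ε Y XDir.E =
        if eW = GW.dist Y XDir.E then GE.dist Y XDir.E else GW.dist Y XDir.E) :
      IsConstructionQ (.node D ε eW eE GW GE)

/-- ρ-equivalence of constructions: the least equivalence relation containing
ρ1, ρ2, ρ3 and closed under congruence with respect to cuts. -/
inductive RhoEquiv : CTree → CTree → Prop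
  | rho1 (P Q R : CTree) (eW eE fW fE : ℕ × ℕ)
      (hP : IsConstruction P) (hQ : IsConstruction Q) (hR : IsConstruction R)
      (heW : P.rootGraph.isEEdge eW) (hfW : Q.rootGraph.isEEdge fW)
      (heE : Q.rootGraph.isWEdge eE) (hfE : R.rootGraph.isWEdge fE)
      (h1 : IsConstruction (mkNode (mkNode P Q eW eE) R fW fE))
      (h2 : IsConstruction (mkNode P (mkNode Q R fW fE) eW eE)) :
      RhoEquiv (mkNode (mkNode P Q eW eE) R fW fE)
               (mkNode P (mkNode Q R fW fE) eW eE)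
  | rho2 (P Q R : CTree) (eW eE fW fE : ℕ × ℕ)
      (hP : IsConstruction P) (hQ : IsConstruction Q) (hR : IsConstruction R)
      (heW : P.rootGraph.isEEdge eW) (hfW : P.rootGraph.isEEdge fW)
      (hne : eW ≠ fW)
      (heE : Q.rootGraph.isWEdge eE) (hfE : R.rootGraph.isWEdge fE)
      (h1 : IsConstruction (mkNode (mkNode P Q eW eE) R fW fE))
      (h2 : IsConstruction (mkNode (mkNode P R fW fE) Q eW eE)) :
      RhoEquiv (mkNode (mkNode P Q eW eE) R fW fE)
               (mkNode (mkNode P R fW fE) Q eW eE)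
  | rho3 (P Q R : CTree) (eW eE fW fE : ℕ × ℕ)
      (hP : IsConstruction P) (hQ : IsConstruction Q) (hR : IsConstruction R)
      (heE : P.rootGraph.isWEdge eE) (hfE : P.rootGraph.isWEdge fE)
      (hne : eE ≠ fE)
      (heW : Q.rootGraph.isEEdge eW) (hfW : R.rootGraph.isEEdge fW)
      (h1 : IsConstruction (mkNode R (mkNode Q P eW eE) fW fE))
      (h2 : IsConstruction (mkNode Q (mkNode R P fW fE) eW eE)) :
      RhoEquiv (mkNode R (mkNode Q P eW eE) fW fE)
               (mkNode Q (mkNode R P fW fE) eW eE)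
  | congr (G1 G2 H1 H2 : CTree) (eW eE : ℕ × ℕ)
      (h12 : RhoEquiv G1 G2) (h34 : RhoEquiv H1 H2)
      (hc1 : IsConstruction (mkNode G1 H1 eW eE))
      (hc2 : IsConstruction (mkNode G2 H2 eW eE)) :
      RhoEquiv (mkNode G1 H1 eW eE) (mkNode G2 H2 eW eE)
  | refl (G : CTree) (h : IsConstruction G) : RhoEquiv G G
  | symm {G H : CTree} (h : RhoEquiv G H) : RhoEquiv H G
  | trans {G H K : CTree} (h1 : RhoEquiv G H) (h2 : RhoEquiv H K) :
      RhoEquiv G K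

/-- The class `[G]`: all constructions with the same root graph as `G` whose
leaves are determined by the same basic K-graphs as those of `G`. -/
def classOf (G : CTree) : Set CTree :=
  {H | IsConstruction H ∧ H.rootGraph = G.rootGraph ∧
    ∀ p : DG × DistE, p ∈ H.leaves ↔ p ∈ G.leaves}

/-- Renaming the vertices of a digraph along a function. -/
def DG.rename (f : ℕ → ℕ) (D : DG) : DG where
  verts := D.verts.image f
  edges := D.edges.image (fun e => (f e.1, f e.2))

/-- Renaming the vertices throughout a tree. -/
def CTree.rename (f : ℕ → ℕ) : CTree → CTree
  | .leaf D ε => .leaf (DG.rename f D) (fun Y X => (f (ε Y X).1, f (ε Y X).2))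
  | .node D ε eW eE l r =>
      .node (DG.rename f D) (fun Y X => (f (ε Y X).1, f (ε Y X).2))
        (f eW.1, f eW.2) (f eE.1, f eE.2) (l.rename f) (r.rename f)

/-- σ-equivalence: `H` is obtained from `G` by a bijective renaming of
vertices that fixes the root vertices (so only secondary vertices may be
renamed). -/
def SigmaEquiv (G H : CTree) : Prop :=
  ∃ f : ℕ ≃ ℕ, (∀ v ∈ G.rootGraph.verts, f v = v) ∧ H = G.rename f

/-- The global compass graph `‖G‖`: all constructions σ-equivalent to a
construction in `[G]`. -/
def normClass (G : CTree) : Set CTree :=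
  {H | ∃ K ∈ classOf G, SigmaEquiv K H}

/-- The labelling `L` of `λ(G) = ⟨D, L⟩`, defined by induction on `G`: at a
leaf given by a basic K-graph with inner vertex `b`, `YX(b) = YX(B)`; at a
node, the value is inherited from the appropriate subtree unless it is one of
the two cut edges, in which case it is the new edge introduced by the cut. -/
def lamG : CTree → Lab
  | .leaf _ ε => fun _ => ε
  | .node _ _ eW eE l r => fun a Y X =>
      let v := if a ∈ l.rootGraph.verts then lamG l a Y X else lamG r a Y X
      if v = eW ∨ v = eE then (eW.1, eE.2) else v

/-- `L` assigns to every inner vertex `a` edges `L a Y W` ending in `a` and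
edges `L a Y E` beginning in `a`. -/
def ProperLab (D : DG) (L : Lab) : Prop :=
  ∀ a, D.isInner a → ∀ Y : YDir,
    L a Y XDir.W ∈ D.edges ∧ (L a Y XDir.W).2 = a ∧
    L a Y XDir.E ∈ D.edges ∧ (L a Y XDir.E).1 = a

/-- `⟨D, L⟩` separates `N` from `S`. -/
def SeparatesNS (D : DG) (L : Lab) : Prop :=
  ∀ a, D.isInner a →
    (2 ≤ (D.edges.filter (fun e => e.2 = a)).card →
      L a YDir.N XDir.W ≠ L a YDir.S XDir.W) ∧
    (2 ≤ (D.edges.filter (fun e => e.1 = a)).card →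
      L a YDir.N XDir.E ≠ L a YDir.S XDir.E)

/-- A list `a_1, ..., a_n` is `Y`-decent in `⟨D, L⟩`: `n = 1`, or
`YE(a_1) = (a_1, a_2)`, or `YW(a_n) = (a_{n-1}, a_n)`. -/
def Ydecent (L : Lab) (Y : YDir) (l : List ℕ) : Prop :=
  ∀ a b t, l = a :: b :: t →
    (L a Y XDir.E = (a, b) ∨
      ∃ c d t', l.reverse = d :: c :: t' ∧ L d Y XDir.W = (c, d))

/-- `⟨D, L⟩` is a local compass graph. -/
def IsLocalCompass (D : DG) (L : Lab) : Prop :=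
  D.IsOriented ∧ ProperLab D L ∧
  D.WeaklyConnected ∧ D.Asemicyclic ∧ D.WEFunctional ∧ (∃ a, D.isInner a) ∧
  SeparatesNS D L ∧
  (∀ l, D.IsPath l → Ydecent L YDir.N l ∧ Ydecent L YDir.S l)

/-- A path (list) covers an edge `g` when `g` is a pair of consecutive
vertices of the list. -/
def covers (l : List ℕ) (g : ℕ × ℕ) : Prop := g ∈ l.zip l.tail

/-- A `YX`-edge in `⟨D, L⟩`. -/
def YXedge (D : DG) (L : Lab) (Y : YDir) : XDir → (ℕ × ℕ) → Prop
  | .W, g => g ∈ D.edges ∧ (L g.2 Y XDir.W = g ∨ D.isEEdge g)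
  | .E, g => g ∈ D.edges ∧ (L g.1 Y XDir.E = g ∨ D.isWEdge g)

/-- A proper semipath: a semipath such that neither it nor its reverse is a
path. -/
def ProperSemipath (D : DG) (l : List ℕ) : Prop :=
  D.IsSemipath l ∧ ¬ D.IsPath l ∧ ¬ D.IsPath l.reverse

/-- A transversal edge `(a,b)`: there is a proper semipath beginning with
`a, b` and a proper semipath beginning with `b, a`. -/
def Transversal (D : DG) (e : ℕ × ℕ) : Prop :=
  e ∈ D.edges ∧
  (∃ t, ProperSemipath D (e.1 :: e.2 :: t)) ∧
  (∃ t, ProperSemipath D (e.2 :: e.1 :: t))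

/-- The edge of `D` that connects two semi-adjacent vertices `a` and `b`. -/
def connEdge (D : DG) (a b : ℕ) : ℕ × ℕ :=
  if (a, b) ∈ D.edges then (a, b) else (b, a)

/-- The connecting edges of a list: the edges connecting its consecutive
vertices. -/
def connEdges (D : DG) (l : List ℕ) (e : ℕ × ℕ) : Prop :=
  ∃ p ∈ l.zip l.tail, e = connEdge D p.1 p.2

/-- A bifurcation: three distinct edges with a common vertex. -/
def Bifurcation (D : DG) (e1 e2 e3 : ℕ × ℕ) : Prop :=
  e1 ∈ D.edges ∧ e2 ∈ D.edges ∧ e3 ∈ D.edges ∧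
  e1 ≠ e2 ∧ e1 ≠ e3 ∧ e2 ≠ e3 ∧
  ∃ v, (v = e1.1 ∨ v = e1.2) ∧ (v = e2.1 ∨ v = e2.2) ∧ (v = e3.1 ∨ v = e3.2)

/-- A K-graph: a weakly connected, asemicyclic, `W`-`E`-functional oriented
graph with an inner vertex in which no bifurcation is transversal. -/
def IsKGraph (D : DG) : Prop :=
  D.IsOriented ∧ D.WeaklyConnected ∧ D.Asemicyclic ∧ D.WEFunctional ∧
  (∃ a, D.isInner a) ∧
  ∀ e1 e2 e3, Bifurcation D e1 e2 e3 →
    ¬ (Transversal D e1 ∧ Transversal D e2 ∧ Transversal D e3)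

/-- A Q-graph: a weakly connected, asemicyclic, `W`-`E`-functional oriented
graph with an inner vertex. -/
def IsQGraph (D : DG) : Prop :=
  D.IsOriented ∧ D.WeaklyConnected ∧ D.Asemicyclic ∧ D.WEFunctional ∧
  ∃ a, D.isInner a

/-!
Decency only depends on the first and the last edge of a path: if a path leads from an edge `e` to
an edge `f`, then for each `Y` either `e` is a `YE`-edge or `f` is a `YW`-edge. The distinguished
edge `YX` of a construction is characterized by the labelling: it is the only `X`-edge such that
whatever leads to it in the direction `X` consists of `YX`-edges.

A path through the new edge of a cut consists of a path of the western part ending with its cut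
edge and a path of the eastern part beginning with its cut edge. If all such paths are decent, then
for each `Y` the western paths all begin with `YE`-edges or the eastern paths all end with
`YW`-edges, which says that the cut edge is a distinguished edge `YE` of the western part or `YW`
of the eastern part. So (XYC) is exactly what makes a cut of two local compass graphs a local
compass graph.

Hence every construction yields a local compass graph. Conversely, each inner edge of a local
compass graph separates it, since there are no semicycles, and the graph is a cut of two local
compass graphs with fewer inner vertices. Without inner edges it is a basic K-graph.
-/

/-! ### Oriented graphs through their edges -/

/-- The end of an edge on the side `X`: where it begins for `W`, where it ends for `E`. -/
def tip (X : XDir) (e : ℕ × ℕ) : ℕ := pick e.1 e.2 X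

@[simp] theorem tip_W (e : ℕ × ℕ) : tip .W e = e.1 := rfl

@[simp] theorem tip_E (e : ℕ × ℕ) : tip .E e = e.2 := rfl

@[simp] theorem XDir.other_other (X : XDir) : X.other.other = X := by cases X <;> rfl

theorem XDir.eq_or_eq_other (X Z : XDir) : Z = X ∨ Z = X.other := by
  cases X <;> cases Z <;> simp [XDir.other]

theorem tip_map (g : ℕ → ℕ) (Z : XDir) (e : ℕ × ℕ) : tip Z (Prod.map g g e) = g (tip Z e) := by
  cases Z <;> rfl

theorem edge_ext (X : XDir) {e f : ℕ × ℕ} (h : tip X e = tip X f)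
    (h' : tip X.other e = tip X.other f) : e = f := by
  cases X
  exacts [Prod.ext h h', Prod.ext h' h]

/-- The edge `f` has exactly one of its two ends in `S`. -/
def Crosses (S : Set ℕ) (f : ℕ × ℕ) : Prop := ¬(f.1 ∈ S ↔ f.2 ∈ S)

theorem crosses_iff (X : XDir) {S : Set ℕ} {f : ℕ × ℕ} :
    Crosses S f ↔ ¬(tip X f ∈ S ↔ tip X.other f ∈ S) := by
  cases X
  exacts [.rfl, not_congr iff_comm]

theorem mem_of_reachable {V : Type*} {G : SimpleGraph V} {S : Set V}
    (hS : ∀ a b, G.Adj a b → a ∈ S → b ∈ S) {a b : V} (h : G.Reachable a b) (ha : a ∈ S) :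
    b ∈ S := by
  rw [SimpleGraph.reachable_iff_reflTransGen] at h
  induction h with
  | refl => exact ha
  | tail _ hbc ih => exact hS _ _ hbc ih

namespace DG

variable {D : DG}

namespace IsOriented

theorem tip_mem (ho : D.IsOriented) {f : ℕ × ℕ} (hf : f ∈ D.edges) (Z : XDir) :
    tip Z f ∈ D.verts := by
  cases Z
  exacts [(ho.1 f hf).1, (ho.1 f hf).2]

theorem tip_ne (ho : D.IsOriented) {f : ℕ × ℕ} (hf : f ∈ D.edges) (Z : XDir) :
    tip Z f ≠ tip Z.other f := by
  cases Z
  exacts [ho.2.1 f hf, (ho.2.1 f hf).symm]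

theorem eq_of_tip_mem_pair (ho : D.IsOriented) {e f : ℕ × ℕ} (he : e ∈ D.edges)
    (hf : f ∈ D.edges) (h : ∀ Z, tip Z f = e.1 ∨ tip Z f = e.2) : f = e := by
  obtain ⟨a, b⟩ := e
  obtain ⟨c, d⟩ := f
  have hirr := ho.2.1 _ hf
  have hanti := ho.2.2.1 _ _ he
  have hW := h .W
  have hE := h .E
  simp only [tip_W, tip_E] at hW hE hirr
  grind

theorem isInner_iff (ho : D.IsOriented) {a : ℕ} :
    D.isInner a ↔ ∀ Z, ∃ f ∈ D.edges, tip Z f = a := by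
  constructor
  · rintro ⟨-, ⟨b, hb⟩, c, hc⟩ (_ | _)
    exacts [⟨_, hc, rfl⟩, ⟨_, hb, rfl⟩]
  · intro h
    obtain ⟨⟨b, _⟩, hb, rfl⟩ := h .E
    obtain ⟨⟨_, c⟩, hc, rfl⟩ := h .W
    exact ⟨ho.tip_mem hb .E, ⟨b, hb⟩, c, hc⟩

theorem isXEdge_iff (ho : D.IsOriented) {X : XDir} {f : ℕ × ℕ} :
    D.isXEdge X f ↔ f ∈ D.edges ∧ ¬D.isInner (tip X f) := by
  cases X <;> refine and_congr_right fun hf => ⟨fun h hi => ?_, fun h => ⟨?_, fun b hb => h ?_⟩⟩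
  · exact hi.2.1.elim h.2
  · exact ho.tip_mem hf .W
  · exact ⟨ho.tip_mem hf .W, ⟨b, hb⟩, f.2, hf⟩
  · exact hi.2.2.elim h.2
  · exact ho.tip_mem hf .E
  · exact ⟨ho.tip_mem hf .E, ⟨f.1, hf⟩, b, hb⟩

theorem yxEdge_iff (ho : D.IsOriented) {L : Lab} {Y : YDir} {X : XDir} {f : ℕ × ℕ} :
    YXedge D L Y X f ↔
      f ∈ D.edges ∧ (L (tip X.other f) Y X = f ∨ ¬D.isInner (tip X.other f)) := by
  have h : f ∈ D.edges → (¬D.isInner (tip X.other f) ↔ D.isXEdge X.other f) := fun hf => by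
    rw [ho.isXEdge_iff, and_iff_right hf]
  cases X <;> exact and_congr_right fun hf => or_congr_right (h hf).symm

end IsOriented

/-- The underlying simple graph of a digraph. -/
def toSimpleGraph (D : DG) : SimpleGraph ℕ := .fromRel fun a b => (a, b) ∈ D.edges

namespace IsOriented

theorem toSimpleGraph_adj (ho : D.IsOriented) {a b : ℕ} :
    D.toSimpleGraph.Adj a b ↔ D.semiAdj a b := by
  refine (SimpleGraph.fromRel_adj _ _ _).trans (and_iff_right_of_imp ?_)
  rintro (h | h)
  exacts [ho.2.1 _ h, (ho.2.1 _ h).symm]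

theorem isChain_semiAdj_iff (ho : D.IsOriented) {l : List ℕ} :
    l.IsChain D.semiAdj ↔ l.IsChain D.toSimpleGraph.Adj := by
  simp only [List.isChain_iff_getElem, ho.toSimpleGraph_adj]

theorem mem_verts_of_walk (ho : D.IsOriented) {a b : ℕ} (w : D.toSimpleGraph.Walk a b)
    (ha : a ∈ D.verts) : ∀ x ∈ w.support, x ∈ D.verts := fun x hx => by
  refine mem_of_reachable (S := D.verts) (fun x y hxy _ => ?_) (w.takeUntil x hx).reachable ha
  rcases ho.toSimpleGraph_adj.1 hxy with h | h
  exacts [ho.tip_mem h .E, ho.tip_mem h .W]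

theorem exists_isSemipath_iff_reachable (ho : D.IsOriented) {a b : ℕ} (ha : a ∈ D.verts) :
    (∃ l, D.IsSemipath l ∧ l.head? = some a ∧ l.getLast? = some b) ↔
      D.toSimpleGraph.Reachable a b := by
  constructor
  · rintro ⟨l, ⟨hne, -, -, hl⟩, hhead, hlast⟩
    have w := SimpleGraph.Walk.ofSupport l hne (ho.isChain_semiAdj_iff.1 hl)
    rw [List.head?_eq_some_head hne, Option.some.injEq] at hhead
    rw [List.getLast?_eq_some_getLast hne, Option.some.injEq] at hlast
    exact hhead ▸ hlast ▸ w.reachable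
  · intro h
    obtain ⟨p, hp⟩ := h.exists_isPath
    refine ⟨p.support, ⟨p.support_ne_nil, ho.mem_verts_of_walk p ha, hp.support_nodup,
      ho.isChain_semiAdj_iff.2 p.isChain_adj_support⟩, ?_, ?_⟩
    · rw [List.head?_eq_some_head p.support_ne_nil, p.head_support]
    · rw [List.getLast?_eq_some_getLast p.support_ne_nil, p.getLast_support]

theorem asemicyclic_iff_isAcyclic (ho : D.IsOriented) :
    D.Asemicyclic ↔ D.toSimpleGraph.IsAcyclic := by
  constructor
  · intro h a w hw
    refine h w.support ⟨?_, ?_, ?_, hw.nodup_dropLast_support,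
      ho.isChain_semiAdj_iff.2 w.isChain_adj_support⟩
    · have := hw.three_le_length
      rw [w.length_support]
      lia
    · refine ho.mem_verts_of_walk w ?_
      rcases ho.toSimpleGraph_adj.1 (w.adj_snd hw.not_nil) with h | h
      exacts [ho.tip_mem h .W, ho.tip_mem h .E]
    · rw [List.head?_eq_some_head w.support_ne_nil, List.getLast?_eq_some_getLast w.support_ne_nil,
        w.head_support, w.getLast_support]
  · rintro h l ⟨hlen, -, hends, hnodup, hl⟩
    have hne : l ≠ [] := by rintro rfl; simp at hlen
    rw [List.head?_eq_some_head hne, List.getLast?_eq_some_getLast hne, Option.some.injEq] at hends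
    let w := (SimpleGraph.Walk.ofSupport l hne (ho.isChain_semiAdj_iff.1 hl)).copy rfl hends.symm
    have hw : w.support = l := by
      rw [SimpleGraph.Walk.support_copy, SimpleGraph.Walk.support_ofSupport]
    have hwlen : w.length + 1 = l.length := by rw [← w.length_support, hw]
    refine h w (SimpleGraph.Walk.isCycle_iff_isPath_tail_and_le_length.2 ⟨?_, by lia⟩)
    rw [SimpleGraph.Walk.isPath_def, SimpleGraph.Walk.support_tail_of_not_nil, hw]
    · cases l using List.reverseRecOn <;> grind
    · rw [SimpleGraph.Walk.not_nil_iff_lt_length]; lia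

theorem weaklyConnected_iff (ho : D.IsOriented) :
    D.WeaklyConnected ↔
      ∀ S : Set ℕ, (∀ f ∈ D.edges, ¬Crosses S f) → ∀ x ∈ D.verts, ∀ y ∈ D.verts, x ∈ S → y ∈ S := by
  constructor
  · rintro h S hS x hx y hy hxS
    refine mem_of_reachable (fun a b hab ha => ?_)
      ((ho.exists_isSemipath_iff_reachable hx).1 (h x hx y hy)) hxS
    rcases ho.toSimpleGraph_adj.1 hab with h | h
    exacts [(not_not.1 (hS _ h)).1 ha, (not_not.1 (hS _ h)).2 ha]
  · intro h x hx y hy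
    refine (ho.exists_isSemipath_iff_reachable hx).2 <|
      h {z | D.toSimpleGraph.Reachable x z} (fun f hf hcross => hcross ?_) x hx y hy .rfl
    have hadj : D.toSimpleGraph.Adj f.1 f.2 := ho.toSimpleGraph_adj.2 (.inl hf)
    exact ⟨fun h => h.trans hadj.reachable, fun h => h.trans hadj.symm.reachable⟩

theorem asemicyclic_iff (ho : D.IsOriented) :
    D.Asemicyclic ↔ ∀ e ∈ D.edges, ∃ S : Set ℕ, ∀ f ∈ D.edges, Crosses S f ↔ f = e := by
  rw [ho.asemicyclic_iff_isAcyclic, SimpleGraph.isAcyclic_iff_forall_adj_isBridge]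
  constructor
  · intro h e he
    have hbridge := h (ho.toSimpleGraph_adj.2 (.inl he))
    set G := D.toSimpleGraph.deleteEdges {s(e.1, e.2)}
    refine ⟨{z | G.Reachable e.1 z}, fun f hf => ⟨fun hcross => ?_, ?_⟩⟩
    · by_contra hfe
      have hadj : G.Adj f.1 f.2 := by
        refine SimpleGraph.deleteEdges_adj.2 ⟨ho.toSimpleGraph_adj.2 (.inl hf), fun h => hfe ?_⟩
        refine ho.eq_of_tip_mem_pair he hf fun Z => ?_
        have := Sym2.eq_iff.1 h
        cases Z <;> simp only [tip_W, tip_E] <;> tauto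
      exact hcross ⟨fun h => h.trans hadj.reachable, fun h => h.trans hadj.symm.reachable⟩
    · rintro rfl hcross
      exact hbridge (hcross.1 .rfl)
  · intro h
    have key : ∀ e ∈ D.edges, D.toSimpleGraph.IsBridge s(e.1, e.2) := by
      intro e he hreach
      obtain ⟨S, hS⟩ := h e he
      have hstep : ∀ a b, (D.toSimpleGraph.deleteEdges {s(e.1, e.2)}).Adj a b →
          (a ∈ S ↔ b ∈ S) := by
        intro a b hab
        obtain ⟨hab, hne⟩ := SimpleGraph.deleteEdges_adj.1 hab
        rcases ho.toSimpleGraph_adj.1 hab with hab | hab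
        · exact not_not.1 fun hc => hne (by rw [← (hS _ hab).1 hc]; rfl)
        · exact Iff.symm <| not_not.1 fun hc => hne (by rw [← (hS _ hab).1 hc]; exact Sym2.eq_swap)
      exact (hS e he).2 rfl ⟨mem_of_reachable (fun a b hab => (hstep a b hab).1) hreach,
        mem_of_reachable (fun a b hab => (hstep a b hab).1) hreach.symm⟩
    intro a b hab
    rcases ho.toSimpleGraph_adj.1 hab with h | h
    exacts [key _ h, Sym2.eq_swap ▸ key _ h]

end IsOriented

theorem IsOriented.weFunctional_iff (ho : D.IsOriented) :
    D.WEFunctional ↔ ∀ Z, ∀ f ∈ D.edges, ∀ g ∈ D.edges, tip Z f = tip Z g →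
      ¬D.isInner (tip Z f) → f = g := by
  constructor
  · rintro ⟨hW, hE⟩ (_ | _) f hf g hg hfg hinner
    · have hg' : (f.1, g.2) ∈ D.edges := by rwa [show f.1 = g.1 from hfg]
      exact edge_ext .W hfg ((hW f ((ho.isXEdge_iff (X := .W)).2 ⟨hf, hinner⟩)).2 _ hg').symm
    · have hg' : (g.1, f.2) ∈ D.edges := by rwa [show f.2 = g.2 from hfg]
      exact edge_ext .E hfg ((hE f ((ho.isXEdge_iff (X := .E)).2 ⟨hf, hinner⟩)).2 _ hg').symm
  · refine fun h => ⟨fun f hf => ⟨hf, fun c hc => ?_⟩, fun f hf => ⟨hf, fun c hc => ?_⟩⟩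
    · exact congrArg Prod.snd (h .W f hf.1 _ hc rfl ((ho.isXEdge_iff (X := .W)).1 hf).2).symm
    · exact congrArg Prod.fst (h .E f hf.1 _ hc rfl ((ho.isXEdge_iff (X := .E)).1 hf).2).symm

theorem WEFunctional.eq_of_tip_eq (hf : D.WEFunctional) (ho : D.IsOriented) {f g : ℕ × ℕ}
    (hfD : f ∈ D.edges) (hgD : g ∈ D.edges) {Z Z' : XDir} (h : tip Z f = tip Z' g)
    (hinner : ¬D.isInner (tip Z f)) : f = g := by
  rcases Z.eq_or_eq_other Z' with rfl | rfl
  · exact ho.weFunctional_iff.1 hf _ f hfD g hgD h hinner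
  · refine absurd (ho.isInner_iff.2 fun V => ?_) hinner
    rcases Z.eq_or_eq_other V with rfl | rfl
    exacts [⟨f, hfD, rfl⟩, ⟨g, hgD, h.symm⟩]

end DG

theorem properLab_iff {D : DG} {L : Lab} :
    ProperLab D L ↔ ∀ a, D.isInner a → ∀ Y X, L a Y X ∈ D.edges ∧ tip X.other (L a Y X) = a := by
  refine forall_congr' fun a => forall_congr' fun _ => forall_congr' fun Y => ⟨?_, fun h => ?_⟩
  · rintro ⟨h₁, h₂, h₃, h₄⟩ (_ | _)
    exacts [⟨h₁, h₂⟩, ⟨h₃, h₄⟩]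
  · exact ⟨(h .W).1, (h .W).2, (h .E).1, (h .E).2⟩

theorem separatesNS_iff {D : DG} {L : Lab} (hL : ProperLab D L) :
    SeparatesNS D L ↔ ∀ a, D.isInner a → ∀ X, L a .N X = L a .S X →
      ∀ e ∈ D.edges, tip X.other e = a → e = L a .N X := by
  rw [properLab_iff] at hL
  have two_le_card : ∀ a, D.isInner a → ∀ X,
      (2 ≤ {e ∈ D.edges | tip X.other e = a}.card → L a .N X ≠ L a .S X) ↔
        (L a .N X = L a .S X → ∀ e ∈ D.edges, tip X.other e = a → e = L a .N X) := by
    intro a ha X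
    rw [← not_imp_not, not_not, not_le, Nat.lt_succ_iff]
    refine forall_congr' fun _ => Finset.card_le_one.trans ⟨fun h e he hea => ?_, ?_⟩
    · exact h _ (Finset.mem_filter.2 ⟨he, hea⟩) _ (Finset.mem_filter.2 (hL a ha .N X))
    · intro h e he f hf
      rw [Finset.mem_filter] at he hf
      rw [h e he.1 he.2, h f hf.1 hf.2]
  refine forall_congr' fun a => forall_congr' fun ha => ⟨?_, fun h => ?_⟩
  · rintro ⟨hW, hE⟩ (_ | _)
    exacts [(two_le_card a ha .W).1 hW, (two_le_card a ha .E).1 hE]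
  · exact ⟨(two_le_card a ha .W).2 (h .W), (two_le_card a ha .E).2 (h .E)⟩

theorem exists_reverse_eq {α : Type*} (a b : α) (t : List α) :
    ∃ d c t', (a :: b :: t).reverse = d :: c :: t' := by
  match h : (a :: b :: t).reverse with
  | [] | [_] => simpa using congrArg List.length h
  | d :: c :: t' => exact ⟨d, c, t', rfl⟩

namespace DG

variable {D : DG} {X : XDir} {e f g : ℕ × ℕ}

/-- Starting with the edge `e` and always moving in the direction `X` one can reach the edge `f`:
for `X = E` this means that a path of `D` begins with `e` and ends with `f`. -/
def Leads (D : DG) (X : XDir) : ℕ × ℕ → ℕ × ℕ → Prop :=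
  Relation.ReflTransGen fun e f => e ∈ D.edges ∧ f ∈ D.edges ∧ tip X e = tip X.other f

namespace Leads

theorem swap (h : D.Leads X e f) : D.Leads X.other f e := by
  induction h with
  | refl => exact .refl
  | tail _ hbc ih => exact .head ⟨hbc.2.1, hbc.1, by rw [XDir.other_other, hbc.2.2]⟩ ih

theorem head (he : e ∈ D.edges) (hf : f ∈ D.edges) (hef : tip X e = tip X.other f)
    (h : D.Leads X f g) : D.Leads X e g :=
  Relation.ReflTransGen.head ⟨he, hf, hef⟩ h

theorem mem_left (h : D.Leads X e f) (hf : f ∈ D.edges) : e ∈ D.edges := by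
  rcases Relation.ReflTransGen.cases_head h with rfl | ⟨_, ⟨he, -⟩, -⟩
  exacts [hf, he]

end Leads

theorem Asemicyclic.tip_ne_of_leads (ha : D.Asemicyclic) (ho : D.IsOriented) (he : e ∈ D.edges)
    (hf : f ∈ D.edges) (hef : tip X e = tip X.other f) (h : D.Leads X f g) (Z : XDir) :
    tip Z g ≠ tip X.other e := by
  obtain ⟨S, hS⟩ := ho.asemicyclic_iff.1 ha e he
  have hcross : ¬(tip X e ∈ S ↔ tip X.other e ∈ S) := (crosses_iff X).1 ((hS e he).2 rfl)
  have step : ∀ d ∈ D.edges, (tip X.other d ∈ S ↔ tip X e ∈ S) → (tip X d ∈ S ↔ tip X e ∈ S) := by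
    intro d hd hdS
    have hde : d ≠ e := by rintro rfl; exact hcross hdS.symm
    exact (not_not.1 (mt (crosses_iff X).2 (mt (hS d hd).1 hde))).trans hdS
  have key : (tip X.other g ∈ S ↔ tip X e ∈ S) ∧ (tip X g ∈ S ↔ tip X e ∈ S) := by
    induction h with
    | refl => exact ⟨by rw [hef], step f hf (by rw [hef])⟩
    | tail _ hbc ih =>
      have htip := hbc.2.2 ▸ ih.2
      exact ⟨htip, step _ hbc.2.1 htip⟩
  intro hZ
  rcases X.eq_or_eq_other Z with rfl | rfl
  exacts [hcross (hZ ▸ key.2.symm), hcross (hZ ▸ key.1.symm)]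

theorem exists_isPath_of_leads (ho : D.IsOriented) (ha : D.Asemicyclic) (hf : f ∈ D.edges)
    (h : D.Leads .E e f) :
    ∃ t t', D.IsPath (e.1 :: e.2 :: t) ∧ (e.1 :: e.2 :: t).reverse = f.2 :: f.1 :: t' ∧
      ∀ x ∈ e.1 :: e.2 :: t, ∃ g Z, D.Leads .E e g ∧ tip Z g = x := by
  induction h using Relation.ReflTransGen.head_induction_on with
  | refl =>
    refine ⟨[], [], ⟨by simp, ?_, ?_, ?_⟩, rfl, ?_⟩
    · simpa using ho.1 f hf
    · simpa using ho.2.1 f hf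
    · exact List.isChain_pair.2 hf
    · simp only [List.forall_mem_cons]
      exact ⟨⟨f, .W, .refl, rfl⟩, ⟨f, .E, .refl, rfl⟩, by simp⟩
  | @head e e' hstep hlead ih =>
    obtain ⟨a, b⟩ := e
    obtain ⟨b', c⟩ := e'
    obtain ⟨he, he', rfl : b = b'⟩ := hstep
    obtain ⟨t, t', ⟨-, hverts, hnodup, hchain⟩, hrev, hleads⟩ := ih
    have hmem : a ∉ b :: c :: t := fun h => by
      obtain ⟨g, Z, hg, hga⟩ := hleads a h
      exact ha.tip_ne_of_leads ho he he' rfl hg Z hga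
    refine ⟨c :: t, t' ++ [a], ⟨by simp, List.forall_mem_cons.2 ⟨ho.tip_mem he .W, hverts⟩,
      List.nodup_cons.2 ⟨hmem, hnodup⟩, List.isChain_cons_cons.2 ⟨he, hchain⟩⟩, ?_, ?_⟩
    · rw [List.reverse_cons, hrev]
      rfl
    · refine List.forall_mem_cons.2 ⟨⟨_, .W, .refl, rfl⟩, fun x hx => ?_⟩
      obtain ⟨g, Z, hg, hgx⟩ := hleads x hx
      exact ⟨g, Z, hg.head he he' rfl, hgx⟩

theorem leads_of_isChain {a b c d : ℕ} {t t' : List ℕ}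
    (h : (a :: b :: t).IsChain fun x y => (x, y) ∈ D.edges)
    (hrev : (a :: b :: t).reverse = d :: c :: t') :
    (c, d) ∈ D.edges ∧ D.Leads .E (a, b) (c, d) := by
  induction t generalizing a b t' with
  | nil =>
    obtain ⟨rfl, rfl, -⟩ : b = d ∧ a = c ∧ [] = t' := by simpa using hrev
    exact ⟨h.rel, .refl⟩
  | cons x t ih =>
    obtain ⟨d', c', s, hs⟩ := exists_reverse_eq b x t
    rw [List.reverse_cons, hs] at hrev
    obtain ⟨rfl, rfl, -⟩ : d' = d ∧ c' = c ∧ s ++ [a] = t' := by simpa using hrev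
    obtain ⟨hcd, hleads⟩ := ih h.of_cons hs
    exact ⟨hcd, hleads.head h.rel h.of_cons.rel rfl⟩

end DG

/-- The local compass graphs, with decency formulated for edges instead of paths. In this form
the values of `L` at vertices that are not inner are irrelevant. -/
structure IsEdgeCompass (D : DG) (L : Lab) : Prop where
  oriented : D.IsOriented
  proper : ProperLab D L
  connected : D.WeaklyConnected
  asemicyclic : D.Asemicyclic
  functional : D.WEFunctional
  exists_inner : ∃ a, D.isInner a
  separates : SeparatesNS D L
  decent : ∀ Y, ∀ e ∈ D.edges, ∀ f ∈ D.edges, D.Leads .E e f →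
    YXedge D L Y .E e ∨ YXedge D L Y .W f

theorem IsLocalCompass.isEdgeCompass {D : DG} {L : Lab} (h : IsLocalCompass D L) :
    IsEdgeCompass D L := by
  obtain ⟨ho, hL, hconn, ha, hfun, hinner, hsep, hdecent⟩ := h
  refine ⟨ho, hL, hconn, ha, hfun, hinner, hsep, fun Y e he f hf hef => ?_⟩
  obtain ⟨t, t', hpath, hrev, -⟩ := DG.exists_isPath_of_leads ho ha hf hef
  have hY : Ydecent L Y (e.1 :: e.2 :: t) := by
    cases Y
    exacts [(hdecent _ hpath).1, (hdecent _ hpath).2]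
  rcases hY _ _ _ rfl with h | ⟨c, d, s, hs, h⟩
  · exact .inl ⟨he, .inl h⟩
  · obtain ⟨rfl, rfl, -⟩ : f.2 = d ∧ f.1 = c ∧ t' = s := by simpa [hrev] using hs
    exact .inr ⟨hf, .inl h⟩

namespace IsEdgeCompass

variable {D : DG} {L : Lab}

open Classical in
/-- The labelling that agrees with `L` at inner vertices and assigns to a vertex that is not inner
an edge beginning or ending in it, if there is one. `YX`-edges are then recognized by their labels
alone, which decency of paths demands. -/
noncomputable def completion (D : DG) (L : Lab) : Lab := fun a Y X =>
  if D.isInner a then L a Y X else Classical.epsilon fun f => f ∈ D.edges ∧ tip X.other f = a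

theorem completion_of_isInner {a : ℕ} (ha : D.isInner a) : completion D L a = L a := by
  funext Y X
  exact if_pos ha

theorem completion_eq_of_yxEdge (h : IsEdgeCompass D L) {Y : YDir} {X : XDir} {f : ℕ × ℕ}
    (hf : YXedge D L Y X f) : completion D L (tip X.other f) Y X = f := by
  obtain ⟨hfD, hf⟩ := h.oriented.yxEdge_iff.1 hf
  by_cases hinner : D.isInner (tip X.other f)
  · rw [completion_of_isInner hinner]
    exact hf.resolve_right (not_not.2 hinner)
  · obtain ⟨hD, htip⟩ := Classical.epsilon_spec
      (⟨f, hfD, rfl⟩ : ∃ g, g ∈ D.edges ∧ tip X.other g = tip X.other f)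
    rw [completion, if_neg hinner]
    exact (h.functional.eq_of_tip_eq h.oriented hfD hD htip.symm hinner).symm

theorem isLocalCompass_completion (h : IsEdgeCompass D L) :
    IsLocalCompass D (completion D L) := by
  refine ⟨h.oriented, fun a ha Y => ?_, h.connected, h.asemicyclic, h.functional, h.exists_inner,
    fun a ha => ?_, fun l hl => ?_⟩
  · simpa only [completion_of_isInner ha] using h.proper a ha Y
  · simpa only [completion_of_isInner ha] using h.separates a ha
  · suffices hY : ∀ Y, Ydecent (completion D L) Y l from ⟨hY _, hY _⟩
    rintro Y a b t rfl
    obtain ⟨d, c, t', hrev⟩ := exists_reverse_eq a b t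
    obtain ⟨hcd, hleads⟩ := DG.leads_of_isChain hl.2.2.2 hrev
    rcases h.decent Y _ (hleads.mem_left hcd) _ hcd hleads with he | hf
    · exact .inl (h.completion_eq_of_yxEdge he)
    · exact .inr ⟨c, d, t', hrev, h.completion_eq_of_yxEdge hf⟩

end IsEdgeCompass

/-! ### Cuts of oriented graphs -/

/-- Data for a cut: disjoint oriented graphs `P W` and `P E` and an edge `e X` of each `P X` whose
end on the side `X.other`, the one which the cut omits, lies on no other edge of `P X`. -/
structure IsCutPair (P : XDir → DG) (e : XDir → ℕ × ℕ) : Prop where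
  oriented : ∀ X, (P X).IsOriented
  notMem_of_mem : ∀ {X x}, x ∈ (P X).verts → x ∉ (P X.other).verts
  mem : ∀ X, e X ∈ (P X).edges
  eq_of_tip_eq : ∀ {X f Z}, f ∈ (P X).edges → tip Z f = tip X.other (e X) → f = e X

/-- The cut of `P W` and `P E` along the edges `e W` and `e E`. -/
abbrev glue (P : XDir → DG) (e : XDir → ℕ × ℕ) : DG := DG.cut (P .W) (P .E) (e .W) (e .E)

/-- The passage from the vertices of `P X` to those of the cut: the omitted end of `e X` goes to
the end of the new edge that replaces it. -/
def embed (e : XDir → ℕ × ℕ) (X : XDir) (x : ℕ) : ℕ :=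
  if x = tip X.other (e X) then tip X.other (e X.other) else x

/-- The passage from the edges of `P X` to those of the cut, in which both `e W` and `e E` become
the new edge. -/
def embedEdge (e : XDir → ℕ × ℕ) (X : XDir) : ℕ × ℕ → ℕ × ℕ :=
  Prod.map (embed e X) (embed e X)

/-- The retraction of the cut onto `P X` which contracts the rest to the end of `e X` that the cut
omits. -/
def collapse (P : XDir → DG) (e : XDir → ℕ × ℕ) (X : XDir) (x : ℕ) : ℕ :=
  if x ∈ (P X).verts then x else tip X.other (e X)

namespace IsCutPair

variable {P : XDir → DG} {e : XDir → ℕ × ℕ} {X Z V : XDir} {f g p q : ℕ × ℕ} {x : ℕ}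

theorem tip_embedEdge : tip Z (embedEdge e X f) = embed e X (tip Z f) := tip_map _ _ _

theorem embed_of_ne (h : x ≠ tip X.other (e X)) : embed e X x = x := if_neg h

theorem tip_embedEdge_of_ne (h : tip Z f ≠ tip X.other (e X)) :
    tip Z (embedEdge e X f) = tip Z f := by
  rw [tip_embedEdge, embed_of_ne h]

section

variable (h : IsCutPair P e)
include h

theorem tip_self_ne : tip X (e X) ≠ tip X.other (e X) :=
  (h.oriented X).tip_ne (h.mem X) X

theorem tip_same_ne (hf : f ∈ (P X).edges) : tip X f ≠ tip X.other (e X) := by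
  intro htip
  obtain rfl := h.eq_of_tip_eq hf htip
  exact h.tip_self_ne htip

theorem tip_ne (hf : f ∈ (P X).edges) (hne : f ≠ e X) : tip Z f ≠ tip X.other (e X) :=
  fun htip => hne (h.eq_of_tip_eq hf htip)

theorem embedEdge_of_ne (hf : f ∈ (P X).edges) (hne : f ≠ e X) : embedEdge e X f = f :=
  edge_ext X (tip_embedEdge_of_ne (h.tip_ne hf hne)) (tip_embedEdge_of_ne (h.tip_ne hf hne))

theorem embedEdge_self (X : XDir) : embedEdge e X (e X) = ((e .W).1, (e .E).2) := by
  have hne := h.tip_self_ne (X := X)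
  cases X <;> simp_all [embedEdge, Prod.map, embed, XDir.other]

theorem notMem_other (hx : x ∈ (P X.other).verts) : x ∉ (P X).verts := by
  simpa only [XDir.other_other] using h.notMem_of_mem hx

theorem collapse_embed (hx : x ∈ (P X).verts) : collapse P e X (embed e X x) = x := by
  by_cases hleaf : x = tip X.other (e X)
  · have := h.notMem_other ((h.oriented _).tip_mem (h.mem X.other) X.other)
    rw [embed, if_pos hleaf, collapse, if_neg this, hleaf]
  · rw [embed_of_ne hleaf, collapse, if_pos hx]

theorem collapse_embedEdge (hf : f ∈ (P X).edges) :
    Prod.map (collapse P e X) (collapse P e X) (embedEdge e X f) = f := by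
  have key : ∀ Z, collapse P e X (embed e X (tip Z f)) = tip Z f := fun Z =>
    h.collapse_embed ((h.oriented X).tip_mem hf Z)
  exact Prod.ext (key .W) (key .E)

theorem embedEdge_inj (hf : f ∈ (P X).edges) (hg : g ∈ (P X).edges)
    (hfg : embedEdge e X f = embedEdge e X g) : f = g := by
  rw [← h.collapse_embedEdge hf, hfg, h.collapse_embedEdge hg]

theorem mem_edges_iff :
    p ∈ (glue P e).edges ↔ ∃ X, ∃ f ∈ (P X).edges, embedEdge e X f = p := by
  simp only [glue, DG.cut, Finset.mem_insert, Finset.mem_union, Finset.mem_erase]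
  constructor
  · rintro (rfl | ⟨hne, hp⟩ | ⟨hne, hp⟩)
    · exact ⟨.W, _, h.mem .W, h.embedEdge_self .W⟩
    · exact ⟨.W, p, hp, h.embedEdge_of_ne hp hne⟩
    · exact ⟨.E, p, hp, h.embedEdge_of_ne hp hne⟩
  · rintro ⟨X, f, hf, rfl⟩
    by_cases hne : f = e X
    · exact .inl (hne ▸ h.embedEdge_self X)
    · rw [h.embedEdge_of_ne hf hne]
      cases X
      exacts [.inr (.inl ⟨hne, hf⟩), .inr (.inr ⟨hne, hf⟩)]

theorem embedEdge_mem (hf : f ∈ (P X).edges) : embedEdge e X f ∈ (glue P e).edges :=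
  h.mem_edges_iff.2 ⟨X, f, hf, rfl⟩

theorem edge_cases (X : XDir) (hp : p ∈ (glue P e).edges) :
    (∃ f ∈ (P X).edges, embedEdge e X f = p) ∨ p ∈ (P X.other).edges ∧ p ≠ e X.other := by
  obtain ⟨Z, f, hf, rfl⟩ := h.mem_edges_iff.1 hp
  rcases X.eq_or_eq_other Z with rfl | rfl
  · exact .inl ⟨f, hf, rfl⟩
  · by_cases hne : f = e X.other
    · exact .inl ⟨e X, h.mem X, by rw [hne, h.embedEdge_self, h.embedEdge_self]⟩
    · exact .inr ((h.embedEdge_of_ne hf hne).symm ▸ ⟨hf, hne⟩)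

theorem collapse_tip_of_mem_other (hp : p ∈ (P X.other).edges) :
    collapse P e X (tip Z p) = tip X.other (e X) :=
  if_neg (h.notMem_other ((h.oriented _).tip_mem hp Z))

theorem mem_verts_iff :
    x ∈ (glue P e).verts ↔ ∃ X, x ∈ (P X).verts ∧ x ≠ tip X.other (e X) := by
  have hW := h.notMem_of_mem ((h.oriented .W).tip_mem (h.mem .W) .E)
  have hE := h.notMem_of_mem ((h.oriented .E).tip_mem (h.mem .E) .W)
  simp only [glue, DG.cut, Finset.mem_sdiff, Finset.mem_union, Finset.mem_insert,
    Finset.mem_singleton, not_or]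
  constructor
  · rintro ⟨hx | hx, hxW, hxE⟩
    exacts [⟨.W, hx, hxW⟩, ⟨.E, hx, hxE⟩]
  · rintro ⟨_ | _, hx, hne⟩
    · exact ⟨.inl hx, hne, by rintro rfl; exact hE hx⟩
    · exact ⟨.inr hx, by rintro rfl; exact hW hx, hne⟩

theorem embed_mem_verts (hx : x ∈ (P X).verts) : embed e X x ∈ (glue P e).verts := by
  refine h.mem_verts_iff.2 ?_
  by_cases hleaf : x = tip X.other (e X)
  · rw [embed, if_pos hleaf]
    exact ⟨X.other, (h.oriented _).tip_mem (h.mem _) _, h.tip_self_ne⟩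
  · rw [embed_of_ne hleaf]
    exact ⟨X, hx, hleaf⟩

theorem exists_embed_eq (hx : x ∈ (glue P e).verts) : ∃ X, ∃ y ∈ (P X).verts, embed e X y = x := by
  obtain ⟨X, hx, hne⟩ := h.mem_verts_iff.1 hx
  exact ⟨X, x, hx, embed_of_ne hne⟩

theorem exists_of_tip_mem (hp : p ∈ (glue P e).edges) (htip : tip Z p ∈ (P X).verts) :
    ∃ f ∈ (P X).edges, embedEdge e X f = p ∧ tip Z f = tip Z p := by
  rcases h.edge_cases X hp with ⟨f, hf, rfl⟩ | ⟨hp, -⟩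
  · refine ⟨f, hf, rfl, (tip_embedEdge_of_ne fun hleaf => ?_).symm⟩
    rw [tip_embedEdge, embed, if_pos hleaf] at htip
    exact h.notMem_of_mem htip ((h.oriented _).tip_mem (h.mem _) _)
  · exact absurd htip (h.notMem_other ((h.oriented _).tip_mem hp Z))

theorem isOriented_glue : (glue P e).IsOriented := by
  refine ⟨fun p hp => ?_, fun p hp => ?_, fun a b hab hba => ?_, ?_⟩
  · obtain ⟨X, f, hf, rfl⟩ := h.mem_edges_iff.1 hp
    exact ⟨h.embed_mem_verts ((h.oriented X).1 f hf).1, h.embed_mem_verts ((h.oriented X).1 f hf).2⟩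
  · obtain ⟨X, f, hf, rfl⟩ := h.mem_edges_iff.1 hp
    intro heq
    refine (h.oriented X).2.1 f hf ?_
    rw [← h.collapse_embedEdge hf]
    exact congrArg (collapse P e X) heq
  · obtain ⟨X, ⟨c, d⟩, hf, hfab⟩ := h.mem_edges_iff.1 hab
    have hcd := h.collapse_embedEdge hf
    simp only [hfab, Prod.map_apply, Prod.mk.injEq] at hcd
    rcases h.edge_cases X hba with ⟨g, hg, hgba⟩ | ⟨hp, -⟩
    · refine (h.oriented X).2.2.1 c d hf ?_
      rw [← h.collapse_embedEdge hg, hgba] at hg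
      simpa only [Prod.map_apply, hcd.1, hcd.2] using hg
    · refine (h.oriented X).2.1 _ hf ?_
      rw [← hcd.1, ← hcd.2]
      exact (h.collapse_tip_of_mem_other (Z := .E) hp).trans
        (h.collapse_tip_of_mem_other (Z := .W) hp).symm
  · exact ⟨_, h.embed_mem_verts ((h.oriented .W).tip_mem (h.mem .W) .W)⟩

theorem not_isInner_tip_self : ¬(P X).isInner (tip X.other (e X)) := fun hinner => by
  obtain ⟨f, hf, htip⟩ := (h.oriented X).isInner_iff.1 hinner X
  exact h.tip_same_ne hf htip

theorem isInner_glue_iff (hx : x ∈ (P X).verts) : (glue P e).isInner x ↔ (P X).isInner x := by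
  refine ⟨fun hinner => (h.oriented X).isInner_iff.2 fun Z => ?_,
    fun hinner => h.isOriented_glue.isInner_iff.2 fun Z => ?_⟩
  · obtain ⟨p, hp, rfl⟩ := h.isOriented_glue.isInner_iff.1 hinner Z
    obtain ⟨f, hf, -, htip⟩ := h.exists_of_tip_mem hp hx
    exact ⟨f, hf, htip⟩
  · obtain ⟨f, hf, rfl⟩ := (h.oriented X).isInner_iff.1 hinner Z
    refine ⟨_, h.embedEdge_mem hf, tip_embedEdge_of_ne fun hleaf => ?_⟩
    exact h.not_isInner_tip_self (hleaf ▸ hinner)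

theorem crosses_collapse_embedEdge (hf : f ∈ (P X).edges) {S : Set ℕ} :
    Crosses (collapse P e X ⁻¹' S) (embedEdge e X f) ↔ Crosses S f := by
  change Crosses S (Prod.map (collapse P e X) (collapse P e X) (embedEdge e X f)) ↔ _
  rw [h.collapse_embedEdge hf]

theorem not_crosses_collapse (hp : p ∈ (P X.other).edges) (S : Set ℕ) :
    ¬Crosses (collapse P e X ⁻¹' S) p := by
  rw [crosses_iff .W, Set.mem_preimage, Set.mem_preimage, h.collapse_tip_of_mem_other hp,
    h.collapse_tip_of_mem_other hp, not_not]

theorem weaklyConnected_glue (hconn : ∀ X, (P X).WeaklyConnected) :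
    (glue P e).WeaklyConnected := by
  refine h.isOriented_glue.weaklyConnected_iff.2 fun S hS x hx y hy hxS => ?_
  have part : ∀ X, ∀ a ∈ (P X).verts, ∀ b ∈ (P X).verts, embed e X a ∈ S → embed e X b ∈ S :=
    fun X => (h.oriented X).weaklyConnected_iff.1 (hconn X) (embed e X ⁻¹' S)
      fun f hf => hS _ (h.embedEdge_mem hf)
  obtain ⟨X, a, ha, rfl⟩ := h.exists_embed_eq hx
  obtain ⟨Z, b, hb, rfl⟩ := h.exists_embed_eq hy
  have link : embed e X (tip X (e X)) = embed e Z (tip X (e Z)) := by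
    rw [← tip_embedEdge, ← tip_embedEdge, h.embedEdge_self, h.embedEdge_self]
  refine part Z _ ((h.oriented Z).tip_mem (h.mem Z) X) b hb ?_
  exact link ▸ part X a ha _ ((h.oriented X).tip_mem (h.mem X) X) hxS

theorem weaklyConnected_of_glue (hconn : (glue P e).WeaklyConnected) (X : XDir) :
    (P X).WeaklyConnected := by
  refine (h.oriented X).weaklyConnected_iff.2 fun S hS x hx y hy hxS => ?_
  rw [← h.collapse_embed hx] at hxS
  rw [← h.collapse_embed hy]
  refine h.isOriented_glue.weaklyConnected_iff.1 hconn (collapse P e X ⁻¹' S) (fun p hp => ?_)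
    _ (h.embed_mem_verts hx) _ (h.embed_mem_verts hy) hxS
  rcases h.edge_cases X hp with ⟨f, hf, rfl⟩ | ⟨hp, -⟩
  exacts [mt (h.crosses_collapse_embedEdge hf).1 (hS f hf), h.not_crosses_collapse hp S]

theorem asemicyclic_glue (hP : ∀ X, (P X).Asemicyclic) : (glue P e).Asemicyclic := by
  refine h.isOriented_glue.asemicyclic_iff.2 fun p hp => ?_
  obtain ⟨X, f, hf, rfl⟩ := h.mem_edges_iff.1 hp
  obtain ⟨S, hS⟩ := (h.oriented X).asemicyclic_iff.1 (hP X) f hf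
  refine ⟨collapse P e X ⁻¹' S, fun q hq => ⟨fun hcross => ?_, ?_⟩⟩
  · rcases h.edge_cases X hq with ⟨g, hg, rfl⟩ | ⟨hq, -⟩
    · rw [(hS g hg).1 ((h.crosses_collapse_embedEdge hg).1 hcross)]
    · exact absurd hcross (h.not_crosses_collapse hq S)
  · rintro rfl
    exact (h.crosses_collapse_embedEdge hf).2 ((hS f hf).2 rfl)

theorem asemicyclic_of_glue (hK : (glue P e).Asemicyclic) (X : XDir) : (P X).Asemicyclic := by
  refine (h.oriented X).asemicyclic_iff.2 fun f hf => ?_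
  obtain ⟨S, hS⟩ := h.isOriented_glue.asemicyclic_iff.1 hK _ (h.embedEdge_mem hf)
  exact ⟨embed e X ⁻¹' S, fun g hg =>
    (hS _ (h.embedEdge_mem hg)).trans ⟨h.embedEdge_inj hg hf, congrArg _⟩⟩

theorem weFunctional_glue (hP : ∀ X, (P X).WEFunctional) : (glue P e).WEFunctional := by
  refine h.isOriented_glue.weFunctional_iff.2 fun Z p hp q hq hpq hinner => ?_
  obtain ⟨X, hpX, -⟩ := h.mem_verts_iff.1 (h.isOriented_glue.tip_mem hp Z)
  obtain ⟨f, hf, rfl, hfp⟩ := h.exists_of_tip_mem hp hpX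
  obtain ⟨g, hg, rfl, hgq⟩ := h.exists_of_tip_mem hq (hpq ▸ hpX)
  rw [h.isInner_glue_iff hpX, ← hfp] at hinner
  rw [(h.oriented X).weFunctional_iff.1 (hP X) Z f hf g hg (by rw [hfp, hpq, hgq]) hinner]

theorem weFunctional_of_glue (hK : (glue P e).WEFunctional) (X : XDir) :
    (P X).WEFunctional := by
  refine (h.oriented X).weFunctional_iff.2 fun Z f hf g hg hfg hinner => ?_
  by_cases hleaf : tip Z f = tip X.other (e X)
  · rw [h.eq_of_tip_eq hf hleaf, h.eq_of_tip_eq hg (hfg ▸ hleaf)]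
  · refine h.embedEdge_inj hf hg (h.isOriented_glue.weFunctional_iff.1 hK Z _
      (h.embedEdge_mem hf) _ (h.embedEdge_mem hg) (by rw [tip_embedEdge, tip_embedEdge, hfg]) ?_)
    rwa [tip_embedEdge_of_ne hleaf, h.isInner_glue_iff ((h.oriented X).tip_mem hf Z)]

theorem leads_embedEdge (hfg : (P Z).Leads X f g) :
    (glue P e).Leads X (embedEdge e Z f) (embedEdge e Z g) :=
  hfg.lift _ fun a b hab =>
    ⟨h.embedEdge_mem hab.1, h.embedEdge_mem hab.2.1, by rw [tip_embedEdge, tip_embedEdge, hab.2.2]⟩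

theorem exists_of_tip_eq {U : XDir} (hp : p ∈ (glue P e).edges) (hg : g ∈ (P Z).edges)
    (hne : tip V g ≠ tip Z.other (e Z)) (htip : tip U p = tip V (embedEdge e Z g)) :
    ∃ f ∈ (P Z).edges, embedEdge e Z f = p ∧ tip U f = tip V g := by
  rw [tip_embedEdge_of_ne hne] at htip
  obtain ⟨f, hf, hfp, hfU⟩ := h.exists_of_tip_mem hp (htip ▸ (h.oriented Z).tip_mem hg V)
  exact ⟨f, hf, hfp, hfU.trans htip⟩

theorem leads_cases_of_other (hg : g ∈ (P X.other).edges)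
    (hlead : (glue P e).Leads X p (embedEdge e X.other g)) :
    ∃ f ∈ (P X.other).edges, embedEdge e X.other f = p ∧ (P X.other).Leads X f g := by
  induction hlead using Relation.ReflTransGen.head_induction_on with
  | refl => exact ⟨g, hg, rfl, .refl⟩
  | head hstep _ ih =>
    obtain ⟨f, hf, rfl, hlead⟩ := ih
    obtain ⟨d, hd, rfl, htip⟩ := h.exists_of_tip_eq hstep.1 hf (h.tip_same_ne hf) hstep.2.2
    exact ⟨d, hd, rfl, hlead.head hd hf htip⟩

theorem leads_cases_of_same (hg : g ∈ (P X).edges)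
    (hlead : (glue P e).Leads X p (embedEdge e X g)) :
    (∃ f ∈ (P X).edges, f ≠ e X ∧ embedEdge e X f = p ∧ (P X).Leads X f g) ∨
      ∃ f ∈ (P X.other).edges, embedEdge e X.other f = p ∧
        (P X.other).Leads X f (e X.other) ∧ (P X).Leads X (e X) g := by
  have enter : ∀ {q}, (∃ f ∈ (P X).edges, embedEdge e X f = q ∧ (P X).Leads X f g) →
      (∃ f ∈ (P X).edges, f ≠ e X ∧ embedEdge e X f = q ∧ (P X).Leads X f g) ∨
      ∃ f ∈ (P X.other).edges, embedEdge e X.other f = q ∧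
        (P X.other).Leads X f (e X.other) ∧ (P X).Leads X (e X) g := by
    rintro q ⟨f, hf, rfl, hfg⟩
    by_cases hne : f = e X
    · subst hne
      exact .inr ⟨_, h.mem _, by rw [h.embedEdge_self, h.embedEdge_self], .refl, hfg⟩
    · exact .inl ⟨f, hf, hne, rfl, hfg⟩
  induction hlead using Relation.ReflTransGen.head_induction_on with
  | refl => exact enter ⟨g, hg, rfl, .refl⟩
  | head hstep _ ih =>
    rcases ih with ⟨f, hf, hne, rfl, hfg⟩ | ⟨f, hf, rfl, hfe, heg⟩
    · obtain ⟨d, hd, rfl, htip⟩ := h.exists_of_tip_eq hstep.1 hf (h.tip_ne hf hne) hstep.2.2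
      exact enter ⟨d, hd, rfl, hfg.head hd hf htip⟩
    · obtain ⟨d, hd, rfl, htip⟩ := h.exists_of_tip_eq hstep.1 hf (h.tip_same_ne hf) hstep.2.2
      exact .inr ⟨d, hd, rfl, hfe.head hd hf htip, heg⟩

end

end IsCutPair

/-! ### Distinguished edges and labellings of cuts -/

/-- `f` is an `X`-edge which, when moving in the direction `X`, is reached along `YX`-edges only.
A local compass graph has exactly one such edge for each `Y` and `X`. -/
def IsExit (D : DG) (L : Lab) (Y : YDir) (X : XDir) (f : ℕ × ℕ) : Prop :=
  D.isXEdge X f ∧ ∀ e, D.Leads X e f → YXedge D L Y X e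

/-- The edges `ε Y X` are the distinguished edges of a construction whose root graph is `D`,
characterized through the labelling `L`. -/
structure IsDistinguished (D : DG) (L : Lab) (ε : DistE) : Prop where
  isExit : ∀ Y X, IsExit D L Y X (ε Y X)
  eq_of_isExit : ∀ {Y X f}, IsExit D L Y X f → f = ε Y X
  isInner : ∀ Y X, D.isInner (tip X.other (ε Y X))
  leads : ∀ Y, D.Leads .E (ε Y .W) (ε Y .E)

theorem IsExit.mem {D : DG} (ho : D.IsOriented) {L : Lab} {Y : YDir} {X : XDir} {f : ℕ × ℕ}
    (h : IsExit D L Y X f) : f ∈ D.edges := (ho.isXEdge_iff.1 h.1).1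

/-- The labelling `L` of the cut agrees with the labellings `M W` and `M E` of its parts. -/
def Glues (P : XDir → DG) (e : XDir → ℕ × ℕ) (M : XDir → Lab) (L : Lab) : Prop :=
  ∀ X x, (P X).isInner x → ∀ Y Z, L x Y Z = embedEdge e X (M X x Y Z)

namespace IsDistinguished

variable {D : DG} {L : Lab} {ε : DistE} (h : IsDistinguished D L ε)
include h

theorem leads_other (Y : YDir) (X : XDir) : D.Leads X (ε Y X.other) (ε Y X) := by
  cases X
  exacts [(h.leads Y).swap, h.leads Y]

end IsDistinguished

namespace IsCutPair

variable {P : XDir → DG} {e : XDir → ℕ × ℕ} {M : XDir → Lab} {L : Lab} {ε : XDir → DistE}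
  {X Z V : XDir} {Y : YDir} {f g p : ℕ × ℕ}

section

variable (h : IsCutPair P e)
include h

theorem ne_of_isInner (hinner : (P Z).isInner (tip V f)) : tip V f ≠ tip Z.other (e Z) :=
  fun hleaf => h.not_isInner_tip_self (hleaf ▸ hinner)

theorem isInner_tip_embedEdge (hf : f ∈ (P Z).edges) (hne : tip V f ≠ tip Z.other (e Z)) :
    (glue P e).isInner (tip V (embedEdge e Z f)) ↔ (P Z).isInner (tip V f) := by
  rw [tip_embedEdge_of_ne hne, h.isInner_glue_iff ((h.oriented Z).tip_mem hf V)]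

theorem isXEdge_embedEdge (hf : f ∈ (P Z).edges) (hne : tip X f ≠ tip Z.other (e Z)) :
    (glue P e).isXEdge X (embedEdge e Z f) ↔ (P Z).isXEdge X f := by
  rw [h.isOriented_glue.isXEdge_iff, (h.oriented Z).isXEdge_iff, and_iff_right hf,
    and_iff_right (h.embedEdge_mem hf), h.isInner_tip_embedEdge hf hne]

theorem isXEdge_self (X : XDir) : (P X.other).isXEdge X (e X.other) := by
  have hleaf := h.not_isInner_tip_self (X := X.other)
  rw [X.other_other] at hleaf
  exact (h.oriented _).isXEdge_iff.2 ⟨h.mem _, hleaf⟩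

end

section

variable (h : IsCutPair P e) (hL : Glues P e M L)
include h hL

theorem properLab_glue (hM : ∀ X, ProperLab (P X) (M X)) : ProperLab (glue P e) L := by
  refine properLab_iff.2 fun a ha Y Z => ?_
  obtain ⟨X, haX, -⟩ := h.mem_verts_iff.1 ha.1
  have hinner := (h.isInner_glue_iff haX).1 ha
  obtain ⟨hmem, htip⟩ := properLab_iff.1 (hM X) a hinner Y Z
  rw [hL X a hinner]
  refine ⟨h.embedEdge_mem hmem, ?_⟩
  rw [tip_embedEdge_of_ne (h.ne_of_isInner (htip.symm ▸ hinner)), htip]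

theorem separatesNS_glue (hM : ∀ X, ProperLab (P X) (M X))
    (hsep : ∀ X, SeparatesNS (P X) (M X)) : SeparatesNS (glue P e) L := by
  refine (separatesNS_iff (h.properLab_glue hL hM)).2 fun a ha Z hNS p hp hpa => ?_
  obtain ⟨X, haX, -⟩ := h.mem_verts_iff.1 ha.1
  have hinner := (h.isInner_glue_iff haX).1 ha
  have hmem := fun Y => (properLab_iff.1 (hM X) a hinner Y Z).1
  obtain ⟨f, hf, rfl, hfa⟩ := h.exists_of_tip_mem hp (hpa.symm ▸ haX)
  rw [hL X a hinner, hL X a hinner] at hNS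
  rw [hL X a hinner, (separatesNS_iff (hM X)).1 (hsep X) a hinner Z
    (h.embedEdge_inj (hmem _) (hmem _) hNS) f hf (hfa.trans hpa)]

theorem separatesNS_of_glue (hM : ProperLab (P X) (M X)) (hLK : ProperLab (glue P e) L)
    (hsep : SeparatesNS (glue P e) L) : SeparatesNS (P X) (M X) := by
  refine (separatesNS_iff hM).2 fun a ha Z hNS f hf hfa => ?_
  have hne : tip Z.other f ≠ tip X.other (e X) := h.ne_of_isInner (hfa.symm ▸ ha)
  refine h.embedEdge_inj hf ((properLab_iff.1 hM) a ha .N Z).1 ?_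
  rw [← hL X a ha]
  refine (separatesNS_iff hLK).1 hsep a ((h.isInner_glue_iff ha.1).2 ha) Z ?_ _
    (h.embedEdge_mem hf) ((tip_embedEdge_of_ne hne).trans hfa)
  rw [hL X a ha, hL X a ha, hNS]

theorem yxEdge_of_glue (hM : ProperLab (P Z) (M Z)) (hf : f ∈ (P Z).edges)
    (hfX : YXedge (glue P e) L Y X (embedEdge e Z f)) : YXedge (P Z) (M Z) Y X f := by
  refine (h.oriented Z).yxEdge_iff.2 ⟨hf, ?_⟩
  by_cases hinner : (P Z).isInner (tip X.other f)
  · have hne := h.ne_of_isInner hinner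
    have hlab := (h.isOriented_glue.yxEdge_iff.1 hfX).2.resolve_right
      (not_not.2 ((h.isInner_tip_embedEdge hf hne).2 hinner))
    rw [tip_embedEdge_of_ne hne, hL Z _ hinner] at hlab
    exact .inl (h.embedEdge_inj (properLab_iff.1 hM _ hinner Y X).1 hf hlab)
  · exact .inr hinner

theorem yxEdge_glue (hne : tip X.other f ≠ tip Z.other (e Z)) (hfX : YXedge (P Z) (M Z) Y X f) :
    YXedge (glue P e) L Y X (embedEdge e Z f) := by
  obtain ⟨hf, hfX⟩ := (h.oriented Z).yxEdge_iff.1 hfX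
  refine h.isOriented_glue.yxEdge_iff.2 ⟨h.embedEdge_mem hf, ?_⟩
  by_cases hinner : (P Z).isInner (tip X.other f)
  · rw [tip_embedEdge_of_ne hne, hL Z _ hinner, hfX.resolve_right (not_not.2 hinner)]
    exact .inl rfl
  · exact .inr (mt (h.isInner_tip_embedEdge hf hne).1 hinner)

theorem yxEdge_glue_of_other (hfX : YXedge (P X.other) (M X.other) Y X f) :
    YXedge (glue P e) L Y X (embedEdge e X.other f) :=
  h.yxEdge_glue hL (h.tip_same_ne ((h.oriented _).yxEdge_iff.1 hfX).1) hfX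

theorem yxEdge_glue_of_same (hne : f ≠ e X) (hfX : YXedge (P X) (M X) Y X f) :
    YXedge (glue P e) L Y X (embedEdge e X f) :=
  h.yxEdge_glue hL (h.tip_ne ((h.oriented _).yxEdge_iff.1 hfX).1 hne) hfX

theorem isExit_of_other (hM : ProperLab (P X.other) (M X.other)) (hf : f ∈ (P X.other).edges)
    (hne : f ≠ e X.other) :
    IsExit (glue P e) L Y X (embedEdge e X.other f) ↔ IsExit (P X.other) (M X.other) Y X f := by
  refine and_congr (h.isXEdge_embedEdge hf (h.tip_ne hf hne))
    ⟨fun hall d hdf => ?_, fun hall p hpf => ?_⟩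
  · exact h.yxEdge_of_glue hL hM (hdf.mem_left hf) (hall _ (h.leads_embedEdge hdf))
  · obtain ⟨d, -, rfl, hdf⟩ := h.leads_cases_of_other hf hpf
    exact h.yxEdge_glue_of_other hL (hall d hdf)

theorem isExit_of_same (hM : ∀ X, ProperLab (P X) (M X)) (hf : f ∈ (P X).edges) :
    IsExit (glue P e) L Y X (embedEdge e X f) ↔ IsExit (P X) (M X) Y X f ∧
      ((P X).Leads X (e X) f → IsExit (P X.other) (M X.other) Y X (e X.other)) := by
  rw [IsExit, IsExit, h.isXEdge_embedEdge hf (h.tip_same_ne hf), and_assoc]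
  refine and_congr_right fun _ => ⟨fun hall => ⟨fun d hdf => ?_, fun hef => ⟨h.isXEdge_self X,
    fun d hde => ?_⟩⟩, fun ⟨hsame, hother⟩ p hpf => ?_⟩
  · exact h.yxEdge_of_glue hL (hM _) (hdf.mem_left hf) (hall _ (h.leads_embedEdge hdf))
  · refine h.yxEdge_of_glue hL (hM _) (hde.mem_left (h.mem _)) (hall _ ?_)
    refine (h.leads_embedEdge hde).trans ?_
    rw [h.embedEdge_self, ← h.embedEdge_self X]
    exact h.leads_embedEdge hef
  · rcases h.leads_cases_of_same hf hpf with ⟨d, -, hne, rfl, hdf⟩ | ⟨d, -, rfl, hde, hef⟩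
    · exact h.yxEdge_glue_of_same hL hne (hsame d hdf)
    · exact h.yxEdge_glue_of_other hL ((hother hef).2 d hde)

end

/-- The condition (XYC) on the distinguished edges `ε W` and `ε E` of the parts of a cut. -/
def XYC (e : XDir → ℕ × ℕ) (ε : XDir → DistE) : Prop :=
  ∀ Y, e .W = ε .W Y .E ∨ e .E = ε .E Y .W

theorem XYC.or_other (hC : XYC e ε) (Y : YDir) (X : XDir) :
    e X = ε X Y X.other ∨ e X.other = ε X.other Y X := by
  cases X
  exacts [hC Y, (hC Y).symm]

/-- The distinguished edges of a cut, as given by (XYD). -/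
def glueDist (e : XDir → ℕ × ℕ) (ε : XDir → DistE) : DistE := fun Y X =>
  if e X.other = ε X.other Y X then ε X Y X else ε X.other Y X

section

variable (h : IsCutPair P e) (hL : Glues P e M L)
  (hε : ∀ X, IsDistinguished (P X) (M X) (ε X))
include h hε

theorem glueDist_eq_of_eq (hX : e X.other = ε X.other Y X) :
    glueDist e ε Y X = embedEdge e X (ε X Y X) := by
  have hne : ε X Y X ≠ e X := fun hX => h.not_isInner_tip_self (hX ▸ (hε X).isInner Y X)
  rw [glueDist, if_pos hX, h.embedEdge_of_ne (((hε X).isExit Y X).mem (h.oriented X)) hne]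

theorem glueDist_eq_of_ne (hX : e X.other ≠ ε X.other Y X) :
    glueDist e ε Y X = embedEdge e X.other (ε X.other Y X) := by
  rw [glueDist, if_neg hX, h.embedEdge_of_ne (((hε _).isExit Y X).mem (h.oriented _)) hX.symm]

theorem isInner_glueDist (Y : YDir) (X : XDir) :
    (glue P e).isInner (tip X.other (glueDist e ε Y X)) := by
  have part : ∀ Z, (glue P e).isInner (tip X.other (embedEdge e Z (ε Z Y X))) := fun Z =>
    have hinner := (hε Z).isInner Y X
    (h.isInner_tip_embedEdge (((hε Z).isExit Y X).mem (h.oriented Z))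
      (h.ne_of_isInner hinner)).2 hinner
  by_cases hX : e X.other = ε X.other Y X
  exacts [h.glueDist_eq_of_eq hε hX ▸ part X, h.glueDist_eq_of_ne hε hX ▸ part X.other]

theorem leads_glueDist (hC : XYC e ε) (Y : YDir) :
    (glue P e).Leads .E (glueDist e ε Y .W) (glueDist e ε Y .E) := by
  have part := fun X => h.leads_embedEdge ((hε X).leads Y)
  by_cases hW : e .E = ε .E Y .W <;> by_cases hE : e .W = ε .W Y .E
  · rw [h.glueDist_eq_of_eq hε (X := .W) hW, h.glueDist_eq_of_eq hε (X := .E) hE]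
    refine (part .W).trans ?_
    rw [← hE, h.embedEdge_self, ← h.embedEdge_self .E, hW]
    exact part .E
  · rw [h.glueDist_eq_of_eq hε (X := .W) hW, h.glueDist_eq_of_ne hε (X := .E) hE]
    exact part .W
  · rw [h.glueDist_eq_of_ne hε (X := .W) hW, h.glueDist_eq_of_eq hε (X := .E) hE]
    exact part .E
  · exact absurd (hC Y) (not_or.2 ⟨hE, hW⟩)

include hL

theorem isExit_glueDist (hM : ∀ X, ProperLab (P X) (M X)) (Y : YDir) (X : XDir) :
    IsExit (glue P e) L Y X (glueDist e ε Y X) := by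
  have hexit := fun X Z => (hε X).isExit Y Z
  have hmem := fun X Z => (hexit X Z).mem (h.oriented X)
  by_cases hX : e X.other = ε X.other Y X
  · rw [h.glueDist_eq_of_eq hε hX, h.isExit_of_same hL hM (hmem X X), hX]
    exact ⟨hexit _ _, fun _ => hexit _ _⟩
  · rw [h.glueDist_eq_of_ne hε hX, h.isExit_of_other hL (hM _) (hmem _ _) (Ne.symm hX)]
    exact hexit _ _

theorem eq_glueDist_of_isExit (hM : ∀ X, ProperLab (P X) (M X)) (hC : XYC e ε)
    (hp : IsExit (glue P e) L Y X p) : p = glueDist e ε Y X := by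
  rcases h.edge_cases X (hp.mem h.isOriented_glue) with ⟨f, hf, rfl⟩ | ⟨hf, hne⟩
  · obtain ⟨hexit, hleads⟩ := (h.isExit_of_same hL hM hf).1 hp
    obtain rfl := (hε X).eq_of_isExit hexit
    refine (h.glueDist_eq_of_eq hε ?_).symm
    refine (hC.or_other Y X).elim (fun hX => (hε _).eq_of_isExit (hleads ?_)) id
    exact hX ▸ (hε X).leads_other Y X
  · rw [← h.embedEdge_of_ne hf hne] at hp ⊢
    obtain rfl := (hε _).eq_of_isExit ((h.isExit_of_other hL (hM _) hf hne).1 hp)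
    rw [h.glueDist_eq_of_ne hε hne.symm]

theorem isDistinguished_glue (hM : ∀ X, ProperLab (P X) (M X)) (hC : XYC e ε) :
    IsDistinguished (glue P e) L (glueDist e ε) where
  isExit := h.isExit_glueDist hL hε hM
  eq_of_isExit := h.eq_glueDist_of_isExit hL hε hM hC
  isInner := h.isInner_glueDist hε
  leads := h.leads_glueDist hε hC

theorem decent_glue (hM : ∀ X, IsEdgeCompass (P X) (M X)) (hC : XYC e ε) (Y : YDir)
    {q : ℕ × ℕ} (hq : q ∈ (glue P e).edges) (hpq : (glue P e).Leads .E p q) :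
    YXedge (glue P e) L Y .E p ∨ YXedge (glue P e) L Y .W q := by
  rcases h.edge_cases .E hq with ⟨g, hg, rfl⟩ | ⟨hgW, hne⟩
  · rcases h.leads_cases_of_same hg hpq with ⟨f, hf, hne, rfl, hfg⟩ | ⟨f, -, rfl, hfe, heg⟩
    · exact ((hM .E).decent Y f hf g hg hfg).imp (h.yxEdge_glue_of_same hL hne)
        (h.yxEdge_glue_of_other hL (X := .W))
    · refine (hC Y).imp (fun hW => ?_) (fun hE => ?_)
      · refine h.yxEdge_glue_of_other hL (((hε .W).isExit Y .E).2 f ?_)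
        exact hW ▸ hfe
      · refine h.yxEdge_glue_of_other hL (X := .W) (((hε .E).isExit Y .W).2 g ?_)
        exact hE ▸ heg.swap
  · rw [← h.embedEdge_of_ne hgW hne] at hpq ⊢
    obtain ⟨f, hf, rfl, hfq⟩ := h.leads_cases_of_other hgW hpq
    exact ((hM .W).decent Y f hf q hgW hfq).imp (h.yxEdge_glue_of_other hL)
      (h.yxEdge_glue_of_same hL hne)

theorem isEdgeCompass_glue (hM : ∀ X, IsEdgeCompass (P X) (M X)) (hC : XYC e ε) :
    IsEdgeCompass (glue P e) L where
  oriented := h.isOriented_glue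
  proper := h.properLab_glue hL fun X => (hM X).proper
  connected := h.weaklyConnected_glue fun X => (hM X).connected
  asemicyclic := h.asemicyclic_glue fun X => (hM X).asemicyclic
  functional := h.weFunctional_glue fun X => (hM X).functional
  exists_inner :=
    let ⟨a, ha⟩ := (hM .W).exists_inner
    ⟨a, (h.isInner_glue_iff ha.1).2 ha⟩
  separates := h.separatesNS_glue hL (fun X => (hM X).proper) fun X => (hM X).separates
  decent Y _ _ _ hq hpq := h.decent_glue hL hε hM hC Y hq hpq

end

/-- The labelling of `P X` obtained from a labelling of the cut. -/
def restrictLab (P : XDir → DG) (e : XDir → ℕ × ℕ) (L : Lab) (X : XDir) : Lab := fun x Y Z =>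
  Prod.map (collapse P e X) (collapse P e X) (L x Y Z)

section

variable (h : IsCutPair P e)
include h

theorem exists_embedEdge_eq_lab (hL : ProperLab (glue P e) L) {x : ℕ} (hx : (P X).isInner x)
    (Y : YDir) (Z : XDir) :
    ∃ f ∈ (P X).edges, embedEdge e X f = L x Y Z ∧ tip Z.other f = x := by
  obtain ⟨hmem, htip⟩ := properLab_iff.1 hL x ((h.isInner_glue_iff hx.1).2 hx) Y Z
  obtain ⟨f, hf, hfL, hfx⟩ := h.exists_of_tip_mem hmem (htip.symm ▸ hx.1)
  exact ⟨f, hf, hfL, hfx.trans htip⟩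

theorem glues_restrictLab (hL : ProperLab (glue P e) L) :
    Glues P e (restrictLab P e L) L := fun X x hx Y Z => by
  obtain ⟨f, hf, hfL, -⟩ := h.exists_embedEdge_eq_lab hL hx Y Z
  rw [restrictLab, ← hfL, h.collapse_embedEdge hf]

theorem properLab_restrictLab (hL : ProperLab (glue P e) L) (X : XDir) :
    ProperLab (P X) (restrictLab P e L X) := properLab_iff.2 fun x hx Y Z => by
  obtain ⟨f, hf, hfL, hfx⟩ := h.exists_embedEdge_eq_lab hL hx Y Z
  rw [restrictLab, ← hfL, h.collapse_embedEdge hf]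
  exact ⟨hf, hfx⟩

theorem isEdgeCompass_restrictLab (hK : IsEdgeCompass (glue P e) L)
    (hinner : ∃ a, (P X).isInner a) : IsEdgeCompass (P X) (restrictLab P e L X) := by
  have hL := h.glues_restrictLab hK.proper
  have hM := h.properLab_restrictLab hK.proper X
  refine ⟨h.oriented X, hM, h.weaklyConnected_of_glue hK.connected X,
    h.asemicyclic_of_glue hK.asemicyclic X, h.weFunctional_of_glue hK.functional X, hinner,
    h.separatesNS_of_glue hL hM hK.proper hK.separates, fun Y f hf g hg hfg => ?_⟩
  exact (hK.decent Y _ (h.embedEdge_mem hf) _ (h.embedEdge_mem hg) (h.leads_embedEdge hfg)).imp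
    (h.yxEdge_of_glue hL hM hf) (h.yxEdge_of_glue hL hM hg)

theorem xyc_of_isEdgeCompass (hK : IsEdgeCompass (glue P e) L) (hL : Glues P e M L)
    (hM : ∀ X, ProperLab (P X) (M X)) (hε : ∀ X, IsDistinguished (P X) (M X) (ε X)) :
    XYC e ε := by
  intro Y
  have blocked : ∀ X, e X.other ≠ ε X.other Y X → ∃ f ∈ (P X.other).edges,
      (P X.other).Leads X f (e X.other) ∧ ¬YXedge (P X.other) (M X.other) Y X f := by
    intro X hne
    by_contra! hall
    exact hne ((hε _).eq_of_isExit
      ⟨h.isXEdge_self X, fun d hd => hall d (hd.mem_left (h.mem _)) hd⟩)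
  by_contra! hC
  obtain ⟨f, hf, hfW, hfY⟩ := blocked .E hC.1
  obtain ⟨g, hg, hgE, hgY⟩ := blocked .W hC.2
  have hfg : (glue P e).Leads .E (embedEdge e .W f) (embedEdge e .E g) := by
    refine (h.leads_embedEdge hfW).trans ?_
    change (glue P e).Leads .E (embedEdge e .W (e .W)) _
    rw [h.embedEdge_self, ← h.embedEdge_self .E]
    exact h.leads_embedEdge hgE.swap
  rcases hK.decent Y _ (h.embedEdge_mem hf) _ (h.embedEdge_mem hg) hfg with hE | hW
  exacts [hfY (h.yxEdge_of_glue hL (hM _) hf hE), hgY (h.yxEdge_of_glue hL (hM _) hg hW)]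

end

end IsCutPair

/-! ### Basic K-graphs and constructions -/

/-- `D` is the underlying graph of a basic K-graph with inner vertex `b`. -/
structure DG.IsStar (D : DG) (b : ℕ) : Prop where
  oriented : D.IsOriented
  center : D.isInner b
  exists_tip_eq_center : ∀ f ∈ D.edges, ∃ Z, tip Z f = b
  exists_tip_eq : ∀ v ∈ D.verts, ∃ f ∈ D.edges, ∃ Z, tip Z f = v

namespace DG.IsStar

variable {D : DG} {b : ℕ} {L : Lab} {X Z : XDir} {Y : YDir} {e f : ℕ × ℕ}

section

variable (h : D.IsStar b)
include h

theorem tip_other_eq (hf : f ∈ D.edges) (hne : tip Z f ≠ b) : tip Z.other f = b := by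
  obtain ⟨V, hV⟩ := h.exists_tip_eq_center f hf
  rcases Z.eq_or_eq_other V with rfl | rfl
  exacts [absurd hV hne, hV]

theorem tip_ne_center (hf : f ∈ D.edges) (hb : tip Z.other f = b) : tip Z f ≠ b :=
  fun hb' => h.oriented.tip_ne hf Z (hb'.trans hb.symm)

theorem isInner_iff {x : ℕ} : D.isInner x ↔ x = b := by
  refine ⟨fun ⟨_, ⟨a, ha⟩, c, hc⟩ => ?_, fun hx => hx ▸ h.center⟩
  by_contra hne
  obtain rfl : a = b := h.tip_other_eq (Z := .E) ha hne
  obtain rfl : c = a := h.tip_other_eq (Z := .W) hc hne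
  exact h.oriented.2.2.1 _ _ ha hc

theorem weaklyConnected : D.WeaklyConnected := by
  refine h.oriented.weaklyConnected_iff.2 fun S hS x hx y hy hxS => ?_
  have key : ∀ v ∈ D.verts, (v ∈ S ↔ b ∈ S) := by
    intro v hv
    obtain ⟨f, hf, Z, rfl⟩ := h.exists_tip_eq v hv
    by_cases hne : tip Z f = b
    · rw [hne]
    · rw [← h.tip_other_eq hf hne]
      exact not_not.1 (mt (crosses_iff Z).2 (hS f hf))
  exact (key y hy).2 ((key x hx).1 hxS)

theorem asemicyclic : D.Asemicyclic := by
  refine h.oriented.asemicyclic_iff.2 fun e he => ?_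
  obtain ⟨Z, hZ⟩ := h.exists_tip_eq_center e he
  have hne := h.oriented.tip_ne he Z
  refine ⟨{tip Z.other e}, fun f hf => ⟨fun hcross => ?_, ?_⟩⟩
  · obtain ⟨V, hV⟩ : ∃ V, tip V f = tip Z.other e := by
      by_contra! hall
      exact hcross (iff_of_false (hall .W) (hall .E))
    have hVb : tip V.other f = tip Z e :=
      (h.tip_other_eq hf (hV ▸ hZ ▸ hne.symm)).trans hZ.symm
    refine h.oriented.eq_of_tip_mem_pair he hf fun U => ?_
    rcases V.eq_or_eq_other U with rfl | rfl
    · rw [hV]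
      cases Z
      exacts [.inr rfl, .inl rfl]
    · rw [hVb]
      cases Z
      exacts [.inl rfl, .inr rfl]
  · rintro rfl
    exact (crosses_iff Z).2 fun hiff => hne (hiff.2 rfl)

theorem weFunctional : D.WEFunctional := by
  refine h.oriented.weFunctional_iff.2 fun Z f hf g hg hfg hinner => ?_
  have hne : tip Z f ≠ b := mt h.isInner_iff.2 hinner
  exact edge_ext Z hfg ((h.tip_other_eq hf hne).trans (h.tip_other_eq hg (hfg ▸ hne)).symm)

theorem eq_of_leads (hlead : D.Leads X e f) (hne : tip X e ≠ b) : e = f := by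
  rcases Relation.ReflTransGen.cases_head hlead with rfl | ⟨d, ⟨he, hd, hed⟩, -⟩
  · rfl
  · refine absurd (h.isInner_iff.1 (h.oriented.isInner_iff.2 fun V => ?_)) hne
    rcases X.eq_or_eq_other V with rfl | rfl
    exacts [⟨e, he, rfl⟩, ⟨d, hd, hed.symm⟩]

theorem yxEdge_of_ne (he : e ∈ D.edges) (hne : tip X.other e ≠ b) : YXedge D L Y X e :=
  h.oriented.yxEdge_iff.2 ⟨he, .inr (mt h.isInner_iff.1 hne)⟩

theorem isEdgeCompass (hL : ProperLab D L) (hsep : SeparatesNS D L) : IsEdgeCompass D L where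
  oriented := h.oriented
  proper := hL
  connected := h.weaklyConnected
  asemicyclic := h.asemicyclic
  functional := h.weFunctional
  exists_inner := ⟨b, h.center⟩
  separates := hsep
  decent Y e he f hf hef := by
    by_cases hb : tip .W e = b
    · have hne := h.tip_ne_center (Z := .E) he hb
      obtain rfl := h.eq_of_leads hef hne
      exact .inr (h.yxEdge_of_ne he hne)
    · exact .inl (h.yxEdge_of_ne he hb)

theorem isDistinguished (hL : ProperLab D L) : IsDistinguished D L (L b) := by
  have hmem := fun Y X => (properLab_iff.1 hL b h.center Y X).1
  have htip := fun Y X => (properLab_iff.1 hL b h.center Y X).2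
  have hne : ∀ Y X, ¬D.isInner (tip X (L b Y X)) := fun Y X =>
    mt h.isInner_iff.1 (h.tip_ne_center (hmem Y X) (htip Y X))
  refine ⟨fun Y X => ⟨h.oriented.isXEdge_iff.2 ⟨hmem Y X, hne Y X⟩, fun e he => ?_⟩,
    fun {Y X f} hf => ?_, fun Y X => (htip Y X).symm ▸ h.center, fun Y => ?_⟩
  · have heD := he.mem_left (hmem Y X)
    by_cases hb : tip X.other e = b
    · obtain rfl := h.eq_of_leads he (h.tip_ne_center heD hb)
      exact h.oriented.yxEdge_iff.2 ⟨heD, .inl (by rw [hb])⟩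
    · exact h.yxEdge_of_ne heD hb
  · obtain ⟨hfD, hfX⟩ := h.oriented.isXEdge_iff.1 hf.1
    have hfb := h.tip_other_eq hfD (mt h.isInner_iff.2 hfX)
    refine (hfb ▸ (h.oriented.yxEdge_iff.1 (hf.2 f .refl)).2.resolve_right fun hout => hout ?_).symm
    exact hfb ▸ h.center
  · exact .single ⟨hmem _ _, hmem _ _, (htip Y .W).trans (htip Y .E).symm⟩

theorem isBasicK (hL : ProperLab D L) (hsep : SeparatesNS D L) : IsBasicK D (L b) := by
  obtain ⟨hb, ⟨a, ha⟩, c, hc⟩ := h.center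
  refine ⟨h.oriented, b, hb, fun f hf => ?_, fun v hv => ?_, ⟨a, ha⟩, ⟨c, hc⟩,
    hL b h.center, hsep b h.center⟩
  · by_contra! hne
    exact hne.2 (h.tip_other_eq (Z := .W) hf hne.1)
  · refine or_iff_not_imp_left.2 fun hne => ?_
    obtain ⟨⟨x, y⟩, hf, _ | _, rfl⟩ := h.exists_tip_eq v hv
    · obtain rfl : y = b := h.tip_other_eq (Z := .W) hf hne
      exact .inl hf
    · obtain rfl : x = b := h.tip_other_eq (Z := .E) hf hne
      exact .inr hf

end

theorem of_isBasicK {ε : DistE} (hD : IsBasicK D ε) :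
    ∃ b, D.IsStar b ∧ ProperLab D (fun _ => ε) ∧ SeparatesNS D (fun _ => ε) := by
  obtain ⟨ho, b, hb, htouch, hspan, hin, hout, hε, hsep⟩ := hD
  have hstar : D.IsStar b := by
    refine ⟨ho, ⟨hb, hin, hout⟩, fun f hf => ?_, fun v hv => ?_⟩
    · exact (htouch f hf).elim (⟨.W, ·⟩) (⟨.E, ·⟩)
    · rcases hspan v hv with rfl | hv | hv
      exacts [hin.elim fun a ha => ⟨_, ha, .E, rfl⟩, ⟨_, hv, .W, rfl⟩, ⟨_, hv, .E, rfl⟩]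
  exact ⟨b, hstar, fun a ha => hstar.isInner_iff.1 ha ▸ hε,
    fun a ha => hstar.isInner_iff.1 ha ▸ hsep⟩

theorem of_forall_not_isInnerEdge (ho : D.IsOriented) (hconn : D.WeaklyConnected)
    (hfun : D.WEFunctional) (hb : D.isInner b) (hD : ∀ f, ¬D.isInnerEdge f) : D.IsStar b := by
  let S : Set ℕ := {v | ∃ g ∈ D.edges, (∃ Z, tip Z g = v) ∧ ∃ Z, tip Z g = b}
  have touches : ∀ f ∈ D.edges, ∀ Z, tip Z f ∈ S → ∃ V, tip V f = b := by
    rintro f hf Z ⟨g, hg, ⟨V, hVf⟩, U, rfl⟩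
    by_cases hUV : U = V
    · exact ⟨Z, hUV ▸ hVf.symm⟩
    · refine ⟨U, ?_⟩
      rw [hfun.eq_of_tip_eq ho hf hg hVf.symm fun hinner => hD g ⟨hg, ?_⟩]
      rw [← hVf] at hinner
      cases U <;> cases V <;> simp_all
  have hbS : b ∈ S := by
    obtain ⟨g, hg, hgb⟩ := ho.isInner_iff.1 hb .W
    exact ⟨g, hg, ⟨.W, hgb⟩, .W, hgb⟩
  have hverts : ∀ v ∈ D.verts, v ∈ S := fun v hv => by
    refine ho.weaklyConnected_iff.1 hconn S (fun f hf hcross => hcross ?_) b hb.1 v hv hbS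
    exact ⟨fun hS => ⟨f, hf, ⟨.E, rfl⟩, touches f hf .W hS⟩,
      fun hS => ⟨f, hf, ⟨.W, rfl⟩, touches f hf .E hS⟩⟩
  refine ⟨ho, hb, fun f hf => touches f hf .W (hverts _ (ho.tip_mem hf .W)), fun v hv => ?_⟩
  obtain ⟨g, hg, hgv, -⟩ := hverts v hv
  exact ⟨g, hg, hgv⟩

end DG.IsStar

theorem IsCutPair.of_isXEdge {P : XDir → DG} {e : XDir → ℕ × ℕ} (ho : ∀ X, (P X).IsOriented)
    (hfun : ∀ X, (P X).WEFunctional) (hdisj : Disjoint (P .W).verts (P .E).verts)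
    (he : ∀ X, (P X).isXEdge X.other (e X)) : IsCutPair P e := by
  have he' := fun X => (ho X).isXEdge_iff.1 (he X)
  refine ⟨ho, fun {X x} hx => ?_, fun X => (he' X).1, fun {X f Z} hf htip => ?_⟩
  · cases X
    exacts [Finset.disjoint_left.1 hdisj hx, Finset.disjoint_right.1 hdisj hx]
  · exact (hfun X).eq_of_tip_eq (ho X) hf (he' X).1 htip (htip ▸ (he' X).2)

theorem IsCutPair.glues_lamG {P : XDir → DG} {e : XDir → ℕ × ℕ} (h : IsCutPair P e) {D : DG}
    {ε : DistE} {G : XDir → CTree} (hG : ∀ X, (G X).rootGraph = P X)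
    (hL : ∀ X, ProperLab (P X) (lamG (G X))) :
    Glues P e (fun X => lamG (G X)) (lamG (.node D ε (e .W) (e .E) (G .W) (G .E))) := by
  intro X x hx Y Z
  have hmem := (properLab_iff.1 (hL X) x hx Y Z).1
  have hne : lamG (G X) x Y Z ≠ e X.other := fun heq =>
    h.notMem_of_mem ((h.oriented X).tip_mem hmem .W)
      (heq ▸ (h.oriented X.other).tip_mem (h.mem X.other) .W)
  have hval : lamG (.node D ε (e .W) (e .E) (G .W) (G .E)) x Y Z =
      if lamG (G X) x Y Z = e .W ∨ lamG (G X) x Y Z = e .E then ((e .W).1, (e .E).2)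
      else lamG (G X) x Y Z := by
    have hx' : x ∈ (G .W).rootGraph.verts ↔ X = .W := by
      rw [hG]
      cases X
      exacts [iff_of_true hx.1 rfl, iff_of_false (h.notMem_of_mem hx.1) nofun]
    cases X
    · simp only [lamG, if_pos (hx'.2 rfl)]
    · simp only [lamG, if_neg (mt hx'.1 nofun)]
  change _ = embedEdge e X (lamG (G X) x Y Z)
  rw [hval]
  by_cases heq : lamG (G X) x Y Z = e X
  · rw [heq, h.embedEdge_self, if_pos]
    cases X
    exacts [.inl rfl, .inr rfl]
  · rw [h.embedEdge_of_ne hmem heq, if_neg]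
    cases X
    exacts [not_or.2 ⟨heq, hne⟩, not_or.2 ⟨hne, heq⟩]

theorem IsConstruction.isEdgeCompass_and_isDistinguished {G : CTree} (hG : IsConstruction G) :
    IsEdgeCompass G.rootGraph (lamG G) ∧ IsDistinguished G.rootGraph (lamG G) G.dist := by
  induction hG with
  | leaf D ε hD =>
    obtain ⟨b, hstar, hL, hsep⟩ := DG.IsStar.of_isBasicK hD
    exact ⟨hstar.isEdgeCompass hL hsep, hstar.isDistinguished hL⟩
  | node D ε eW eE GW GE _ _ hdisj heW heE hD hXYC hεW hεE ihW ihE =>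
    let G := pick GW GE
    have ih : ∀ X, IsEdgeCompass (G X).rootGraph (lamG (G X)) ∧
        IsDistinguished (G X).rootGraph (lamG (G X)) (G X).dist := by
      rintro (_ | _)
      exacts [ihW, ihE]
    have hcut : IsCutPair (fun X => (G X).rootGraph) (pick eW eE) := by
      refine .of_isXEdge (fun X => (ih X).1.oriented) (fun X => (ih X).1.functional) hdisj ?_
      rintro (_ | _)
      exacts [heW.1, heE.1]
    have hL := hcut.glues_lamG (D := D) (ε := ε) (G := G) (fun _ => rfl) fun X => (ih X).1.proper
    have hdist : ε = IsCutPair.glueDist (pick eW eE) fun X => (G X).dist := by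
      funext Y X
      cases X
      exacts [hεW Y, hεE Y]
    subst hD hdist
    exact ⟨hcut.isEdgeCompass_glue hL (fun X => (ih X).2) (fun X => (ih X).1) hXYC,
      hcut.isDistinguished_glue hL (fun X => (ih X).2) (fun X => (ih X).1.proper) hXYC⟩

/-! ### Cutting an inner edge -/

/-- The edge obtained from `e` by moving its end on the side `X.other` to the vertex `v`. -/
def detach (e : ℕ × ℕ) (X : XDir) (v : ℕ) : ℕ × ℕ := pick (e.1, v) (v, e.2) X

theorem tip_detach (e : ℕ × ℕ) (X : XDir) (v : ℕ) : tip X (detach e X v) = tip X e := by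
  cases X <;> rfl

theorem tip_other_detach (e : ℕ × ℕ) (X : XDir) (v : ℕ) : tip X.other (detach e X v) = v := by
  cases X <;> rfl

open Classical in
/-- The part of `D` on the side `S` of the edge `e`, whose end on the side `X` lies in `S`; the
other end of `e` is replaced by the new vertex `v`. -/
noncomputable def DG.half (D : DG) (e : ℕ × ℕ) (S : Set ℕ) (X : XDir) (v : ℕ) : DG where
  verts := insert v (D.verts.filter (· ∈ S))
  edges := insert (detach e X v) (D.edges.filter fun f => ∀ Z, tip Z f ∈ S)

theorem DG.mem_verts_half {D : DG} {e : ℕ × ℕ} {S : Set ℕ} {X : XDir} {v x : ℕ} :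
    x ∈ (D.half e S X v).verts ↔ x = v ∨ x ∈ D.verts ∧ x ∈ S := by
  simp only [half, Finset.mem_insert, Finset.mem_filter]

theorem DG.mem_edges_half {D : DG} {e f : ℕ × ℕ} {S : Set ℕ} {X : XDir} {v : ℕ} :
    f ∈ (D.half e S X v).edges ↔ f = detach e X v ∨ f ∈ D.edges ∧ ∀ Z, tip Z f ∈ S := by
  simp only [half, Finset.mem_insert, Finset.mem_filter]

/-- Data for the inverse of a cut: the edge `e` of `D` separates the complementary sets `T W` and
`T E` of vertices, and the vertices `v W` and `v E` are new. -/
structure IsSplitting (D : DG) (e : ℕ × ℕ) (T : XDir → Set ℕ) (v : XDir → ℕ) : Prop where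
  oriented : D.IsOriented
  mem : e ∈ D.edges
  mem_other_iff : ∀ X x, x ∈ T X.other ↔ x ∉ T X
  tip_mem : ∀ X, tip X e ∈ T X
  not_crosses : ∀ f ∈ D.edges, f ≠ e → ∀ X, ¬Crosses (T X) f
  notMem : ∀ X, v X ∉ D.verts
  ne_other : ∀ X, v X ≠ v X.other

theorem exists_isSplitting {D : DG} {e : ℕ × ℕ} (ho : D.IsOriented) (ha : D.Asemicyclic)
    (he : e ∈ D.edges) : ∃ T v, IsSplitting D e T v := by
  obtain ⟨S, hS⟩ := ho.asemicyclic_iff.1 ha e he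
  have hcross : ¬(e.1 ∈ S ↔ e.2 ∈ S) := (hS e he).2 rfl
  obtain ⟨a, ha⟩ := Infinite.exists_notMem_finset D.verts
  obtain ⟨b, hb⟩ := Infinite.exists_notMem_finset (insert a D.verts)
  rw [Finset.mem_insert, not_or] at hb
  refine ⟨fun X => {x | (x ∈ S ↔ tip X e ∈ S)}, pick a b, ho, he, ?_, fun X => Iff.rfl, ?_, ?_, ?_⟩
  · rintro (_ | _) x <;> simp only [Set.mem_ofPred_eq, XDir.other, tip_W, tip_E] <;> tauto
  · intro f hf hne X
    have hfS : f.1 ∈ S ↔ f.2 ∈ S := not_not.1 (mt (hS f hf).1 hne)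
    exact not_not.2 (iff_congr hfS .rfl)
  · rintro (_ | _)
    exacts [ha, hb.2]
  · rintro (_ | _)
    exacts [Ne.symm hb.1, hb.1]

namespace IsSplitting

variable {D : DG} {e f : ℕ × ℕ} {T : XDir → Set ℕ} {v : XDir → ℕ} (h : IsSplitting D e T v)
  {X Z : XDir}
include h

theorem tip_ne_new (hf : f ∈ D.edges) : tip Z f ≠ v X :=
  fun htip => h.notMem X (htip ▸ h.oriented.tip_mem hf Z)

theorem eq_detach (hf : f ∈ (D.half e (T X) X (v X)).edges) (htip : tip Z f = v X) :
    f = detach e X (v X) :=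
  (DG.mem_edges_half.1 hf).resolve_right fun hfD => h.tip_ne_new hfD.1 htip

theorem isOriented_half (X : XDir) : (D.half e (T X) X (v X)).IsOriented := by
  have hirr : ∀ f ∈ (D.half e (T X) X (v X)).edges, f.1 ≠ f.2 := by
    intro f hf
    rcases DG.mem_edges_half.1 hf with rfl | ⟨hf, -⟩
    · have hne := h.tip_ne_new (X := X) (Z := X) h.mem
      cases X
      exacts [hne, hne.symm]
    · exact h.oriented.2.1 f hf
  refine ⟨fun f hf => ?_, hirr, fun a b hab hba => ?_, ⟨v X, DG.mem_verts_half.2 (.inl rfl)⟩⟩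
  · suffices hmem : ∀ Z, tip Z f ∈ (D.half e (T X) X (v X)).verts from ⟨hmem .W, hmem .E⟩
    intro Z
    rw [DG.mem_verts_half]
    rcases DG.mem_edges_half.1 hf with rfl | ⟨hf, hfT⟩
    · rcases X.eq_or_eq_other Z with rfl | rfl
      · rw [tip_detach]
        exact .inr ⟨h.oriented.tip_mem h.mem _, h.tip_mem _⟩
      · exact .inl (tip_other_detach e X (v X))
    · exact .inr ⟨h.oriented.tip_mem hf Z, hfT Z⟩
  · by_cases hnew : a = v X ∨ b = v X
    · have heq : (a, b) = (b, a) := by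
        rcases hnew with hnew | hnew
        · rw [h.eq_detach (Z := .W) hab hnew, h.eq_detach (Z := .E) hba hnew]
        · rw [h.eq_detach (Z := .E) hab hnew, h.eq_detach (Z := .W) hba hnew]
      exact hirr _ hab (congrArg Prod.fst heq)
    · have hold : ∀ g ∈ (D.half e (T X) X (v X)).edges, ¬(g.1 = v X ∨ g.2 = v X) → g ∈ D.edges := by
        rintro g hg hgv
        refine ((DG.mem_edges_half.1 hg).resolve_left ?_).1
        rintro rfl
        have := tip_other_detach e X (v X)
        cases X
        exacts [hgv (.inr this), hgv (.inl this)]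
      exact h.oriented.2.2.1 a b (hold _ hab hnew) (hold _ hba (mt Or.symm hnew))

theorem isCutPair : IsCutPair (fun X => D.half e (T X) X (v X)) (fun X => detach e X (v X)) where
  oriented := h.isOriented_half
  notMem_of_mem {X x} hx hx' := by
    rw [DG.mem_verts_half] at hx hx'
    rcases hx with rfl | ⟨hx, hxT⟩ <;> rcases hx' with hx' | ⟨hxD, hxT'⟩
    · exact h.ne_other X hx'
    · exact h.notMem X hxD
    · exact h.notMem _ (hx' ▸ hx)
    · exact (h.mem_other_iff X x).1 hxT' hxT
  mem X := DG.mem_edges_half.2 (.inl rfl)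
  eq_of_tip_eq hf htip := h.eq_detach hf (htip.trans (tip_other_detach _ _ _))

theorem exists_mem (x : ℕ) : ∃ X, x ∈ T X := by
  by_cases hx : x ∈ T .W
  exacts [⟨.W, hx⟩, ⟨.E, (h.mem_other_iff .W x).2 hx⟩]

theorem verts_glue :
    (glue (fun X => D.half e (T X) X (v X)) fun X => detach e X (v X)).verts = D.verts := by
  ext x
  simp only [h.isCutPair.mem_verts_iff, DG.mem_verts_half, tip_other_detach]
  constructor
  · rintro ⟨X, hx, hne⟩
    exact (hx.resolve_left hne).1
  · intro hx
    obtain ⟨X, hxT⟩ := h.exists_mem x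
    exact ⟨X, .inr ⟨hx, hxT⟩, fun hxv => h.notMem X (hxv ▸ hx)⟩

theorem edges_glue :
    (glue (fun X => D.half e (T X) X (v X)) fun X => detach e X (v X)).edges = D.edges := by
  have hnew : ∀ {f}, f ∈ D.edges → ∀ X, f ≠ detach e X (v X) := fun hf X hfe =>
    h.tip_ne_new (Z := X.other) hf (hfe ▸ tip_other_detach e X (v X))
  have hself := h.isCutPair.embedEdge_self
  ext p
  rw [h.isCutPair.mem_edges_iff]
  constructor
  · rintro ⟨X, f, hf, rfl⟩
    rcases DG.mem_edges_half.1 hf with rfl | ⟨hfD, -⟩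
    · rw [hself]
      exact h.mem
    · rwa [h.isCutPair.embedEdge_of_ne hf (hnew hfD X)]
  · intro hp
    by_cases hpe : p = e
    · exact ⟨.W, _, h.isCutPair.mem .W, (hself .W).trans hpe.symm⟩
    · obtain ⟨X, hX⟩ := h.exists_mem p.1
      have hpT : ∀ Z, tip Z p ∈ T X := by
        rintro (_ | _)
        exacts [hX, (not_not.1 (h.not_crosses p hp hpe X)).1 hX]
      have hpX : p ∈ (D.half e (T X) X (v X)).edges := DG.mem_edges_half.2 (.inr ⟨hp, hpT⟩)
      exact ⟨X, p, hpX, h.isCutPair.embedEdge_of_ne hpX (hnew hp X)⟩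

theorem glue_eq : (glue (fun X => D.half e (T X) X (v X)) fun X => detach e X (v X)) = D :=
  congrArg₂ DG.mk h.verts_glue h.edges_glue

end IsSplitting

theorem exists_glue_eq {D : DG} (ho : D.IsOriented) (ha : D.Asemicyclic) {f : ℕ × ℕ}
    (hf : D.isInnerEdge f) :
    ∃ P e, IsCutPair P e ∧ glue P e = D ∧ ∀ X, ∃ a, (P X).isInner a := by
  obtain ⟨T, v, h⟩ := exists_isSplitting ho ha hf.1
  refine ⟨_, _, h.isCutPair, h.glue_eq, fun X => ⟨tip X f, ?_⟩⟩
  have hmem : tip X f ∈ (D.half f (T X) X (v X)).verts :=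
    DG.mem_verts_half.2 (.inr ⟨ho.tip_mem hf.1 X, h.tip_mem X⟩)
  refine (h.isCutPair.isInner_glue_iff hmem).1 ?_
  rw [h.glue_eq]
  cases X
  exacts [hf.2.1, hf.2.2]

namespace IsCutPair

variable {P : XDir → DG} {e : XDir → ℕ × ℕ} {X : XDir}

theorem setOf_isInner_ssubset (h : IsCutPair P e) (hinner : ∃ a, (P X.other).isInner a) :
    {a | (P X).isInner a} ⊂ {a | (glue P e).isInner a} := by
  obtain ⟨a, ha⟩ := hinner
  refine (Set.ssubset_iff_of_subset fun x hx => (h.isInner_glue_iff hx.1).2 hx).2 ⟨a, ?_, ?_⟩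
  · exact (h.isInner_glue_iff ha.1).2 ha
  · exact fun ha' => h.notMem_of_mem ha'.1 ha.1

theorem isConstruction_node {G : XDir → CTree} (h : IsCutPair (fun X => (G X).rootGraph) e)
    (hG : ∀ X, IsConstruction (G X)) (hC : XYC e fun X => (G X).dist) :
    IsConstruction (.node (glue (fun X => (G X).rootGraph) e) (glueDist e fun X => (G X).dist)
      (e .W) (e .E) (G .W) (G .E)) :=
  .node _ _ _ _ _ _ (hG .W) (hG .E) (Finset.disjoint_left.2 fun _ hx => h.notMem_of_mem hx)
    ⟨h.isXEdge_self .E, fun _ hc => congrArg Prod.fst (h.eq_of_tip_eq (Z := .E) hc rfl)⟩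
    ⟨h.isXEdge_self .W, fun _ hc => congrArg Prod.snd (h.eq_of_tip_eq (Z := .W) hc rfl)⟩
    rfl hC (fun _ => rfl) fun _ => rfl

end IsCutPair

theorem IsEdgeCompass.exists_isConstruction {D : DG} {L : Lab} (hD : IsEdgeCompass D L) :
    ∃ G, IsConstruction G ∧ G.rootGraph = D ∧ IsDistinguished D L G.dist := by
  induction hn : {a | D.isInner a}.ncard using Nat.strong_induction_on generalizing D L with
  | _ n ih =>
  subst hn
  by_cases hinner : ∃ f, D.isInnerEdge f
  · obtain ⟨f, hf⟩ := hinner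
    obtain ⟨P, e, h, rfl, hP⟩ := exists_glue_eq hD.oriented hD.asemicyclic hf
    have hfin : {a | (glue P e).isInner a}.Finite :=
      (glue P e).verts.finite_toSet.subset fun a ha => ha.1
    choose G hG hroot hdist using fun X =>
      ih _ (Set.ncard_lt_ncard (h.setOf_isInner_ssubset (hP X.other)) hfin)
        (h.isEdgeCompass_restrictLab hD (hP X)) rfl
    obtain rfl : (fun X => (G X).rootGraph) = P := funext hroot
    have hL := h.glues_restrictLab hD.proper
    have hM := h.properLab_restrictLab hD.proper
    have hC := h.xyc_of_isEdgeCompass hD hL hM hdist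
    exact ⟨_, h.isConstruction_node hG hC, rfl, h.isDistinguished_glue hL hdist hM hC⟩
  · obtain ⟨b, hb⟩ := hD.exists_inner
    have hstar := DG.IsStar.of_forall_not_isInnerEdge hD.oriented hD.connected hD.functional hb
      (not_exists.1 hinner)
    exact ⟨.leaf D (L b), .leaf D _ (hstar.isBasicK hD.proper hD.separates), rfl,
      hstar.isDistinguished hD.proper⟩

/-- An oriented graph is a global K-graph iff it is a local K-graph. -/
theorem global_iff_local (D : DG) (hD : D.IsOriented) :
    (∃ G : CTree, IsConstruction G ∧ G.rootGraph = D) ↔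
      ∃ L : Lab, IsLocalCompass D L := by
  constructor
  · rintro ⟨G, hG, rfl⟩
    exact ⟨_, hG.isEdgeCompass_and_isDistinguished.1.isLocalCompass_completion⟩
  · rintro ⟨L, hL⟩
    obtain ⟨G, hG, hroot, -⟩ := hL.isEdgeCompass.exists_isConstruction
    exact ⟨G, hG, hroot⟩

end PluralCuts
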